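/- arXiv:2401.09650 — 5 statements merged into one kernel-verified Lean document; each statement's English description precedes it below -/
import Mathlib

section
/- For every α > 0 there exists a constant κ_α > 0 depending only on α (one may take κ_α = 2(1 + √(8(α + ln 6)/(3 (ln 2)²)))) such that the following holds: for every d ≥ 1, every orthonormal basis V_1, …, V_{d²} of ℂ^{d×d} with respect to the Hilbert–Schmidt inner product, every integer 1 ≤ ℓ ≤ d², and independent uniformly random signs z_1, …, z_ℓ ∈ {−1, 1}, the random matrix W = ∑_{i=1}^ℓ z_i V_i satisfies P(‖W‖_op > κ_α √d) ≤ 2 exp(−α d). -/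
open Matrix BigOperators

noncomputable section

/-- The `ℓ² → ℓ²` operator norm (largest singular value) of a complex matrix. -/
def opNorm {m n : ℕ} (A : Matrix (Fin m) (Fin n) ℂ) : ℝ :=
  ‖LinearMap.toContinuousLinearMap (Matrix.toEuclideanLin A)‖

/-- The sign `±1` associated with a boolean. -/
def sign (b : Bool) : ℝ := if b then 1 else -1

/-!
The operator norm of `W = ∑ i, X i • V i` is at most the maximum of `re ⟪u, W v⟫` over `1`-nets of
the two balls of radius `2`; a volume count bounds their cardinalities by `5 ^ (2 * m)` and
`5 ^ (2 * n)`. For fixed `u` and `v`, the coefficient `⟪u, V i v⟫` is the Hilbert–Schmidt inner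
product of `u v*` with `V i`, so Bessel's inequality bounds the total variance of the sum
`re ⟪u, W v⟫` of independent sub-Gaussian variables by `‖u‖² ‖v‖²`. Its Gaussian tail at scale
`√(m + n)` then beats the cardinality of the nets.
-/

open Metric MeasureTheory ProbabilityTheory Module WithLp
open scoped NNReal InnerProductSpace

section Net

variable {E : Type*} [NormedAddCommGroup E] [NormedSpace ℝ E] [FiniteDimensional ℝ E]

lemma packingNumber_closedBall_two_le :
    packingNumber 1 (closedBall (0 : E) 2) ≤ ((5 ^ finrank ℝ E : ℕ) : ℕ∞) := by
  refine iSup₂_le fun C hC ↦ iSup_le fun hsep ↦ ?_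
  have card_le (s : Finset E) (hs : (s : Set E) ⊆ C) : s.card ≤ 5 ^ finrank ℝ E := by
    refine Besicovitch.card_le_of_separated s
      (fun c hc ↦ mem_closedBall_zero_iff.1 (hC (hs hc))) fun c hc e he hne ↦ ?_
    have hlt : 1 < edist c e := hsep (hs hc) (hs he) hne
    rw [edist_dist, ← ENNReal.ofReal_one, ENNReal.ofReal_lt_ofReal_iff_of_nonneg zero_le_one,
      dist_eq_norm] at hlt
    exact hlt.le
  by_contra! hlarge
  obtain ⟨s, hsC, hs⟩ := Set.exists_subset_encard_eq (Order.add_one_le_of_lt hlarge)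
  lift s to Finset E using Set.finite_of_encard_eq_coe (k := 5 ^ finrank ℝ E + 1) (mod_cast hs)
  rw [Set.encard_coe_eq_coe_finsetCard] at hs
  have := card_le s hsC
  norm_cast at hs
  lia

variable (E) in
lemma exists_finset_isCover_closedBall_two :
    ∃ N : Finset E, (∀ x ∈ N, ‖x‖ ≤ 2) ∧ IsCover 1 (closedBall (0 : E) 2) N ∧
      N.card ≤ 5 ^ finrank ℝ E := by
  have hle := (coveringNumber_le_packingNumber 1 (closedBall (0 : E) 2)).trans
    packingNumber_closedBall_two_le
  obtain ⟨C, hC, hfin, hcover, hcard⟩ :=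
    exists_set_encard_eq_coveringNumber (ne_top_of_le_ne_top (ENat.natCast_ne_top _) hle)
  lift C to Finset E using hfin
  rw [← hcard, Set.encard_coe_eq_coe_finsetCard, Nat.cast_le] at hle
  exact ⟨C, fun x hx ↦ mem_closedBall_zero_iff.1 (hC hx), hcover, hle⟩

lemma exists_mem_norm_sub_le_of_isCover_closedBall {F : Type*} [SeminormedAddCommGroup F]
    {N : Set F} {ε : ℝ≥0} {r : ℝ} (hN : IsCover ε (closedBall 0 r) N) {x : F} (hx : ‖x‖ ≤ r) :
    ∃ y ∈ N, ‖x - y‖ ≤ ε := by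
  obtain ⟨y, hy, hxy⟩ := hN (mem_closedBall_zero_iff.2 hx)
  exact ⟨y, hy, dist_eq_norm x y ▸ edist_le_coe.1 hxy⟩

end Net

section NormFromNet

variable {𝕜 : Type*} [RCLike 𝕜]

lemma norm_le_of_isCover_of_re_inner_le {E : Type*} [NormedAddCommGroup E] [InnerProductSpace 𝕜 E]
    {N : Set E} (hN : IsCover 1 (closedBall 0 2) N) {w : E} {t : ℝ}
    (h : ∀ u ∈ N, RCLike.re ⟪u, w⟫_𝕜 ≤ t) : ‖w‖ ≤ t := by
  obtain ⟨x, hx, hxw⟩ : ∃ x : E, ‖x‖ ≤ 2 ∧ RCLike.re ⟪x, w⟫_𝕜 = 2 * ‖w‖ := by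
    rcases eq_or_ne w 0 with rfl | hw
    · exact ⟨0, by simp⟩
    have hw' : ‖w‖ ≠ 0 := norm_ne_zero_iff.2 hw
    refine ⟨((2 / ‖w‖ : ℝ) : 𝕜) • w, ?_, ?_⟩
    · rw [norm_smul, RCLike.norm_ofReal, abs_of_nonneg (by positivity), div_mul_cancel₀ _ hw']
    · rw [inner_smul_left, RCLike.conj_ofReal, RCLike.re_ofReal_mul, ← norm_sq_eq_re_inner]
      field_simp
  obtain ⟨u, hu, hxu⟩ := exists_mem_norm_sub_le_of_isCover_closedBall hN hx
  have herr : RCLike.re ⟪x - u, w⟫_𝕜 ≤ ‖w‖ :=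
    (re_inner_le_norm _ _).trans (mul_le_of_le_one_left (norm_nonneg w) hxu)
  rw [inner_sub_left, map_sub, hxw] at herr
  linarith [h u hu]

lemma norm_clm_le_of_isCover {E F : Type*} [NormedAddCommGroup E] [NormedSpace 𝕜 E]
    [NormedAddCommGroup F] [NormedSpace 𝕜 F] {N : Set E} (hN : IsCover 1 (closedBall 0 2) N)
    {T : E →L[𝕜] F} {t : ℝ} (ht : 0 ≤ t) (h : ∀ v ∈ N, ‖T v‖ ≤ t) : ‖T‖ ≤ t := by
  suffices ‖T‖ ≤ (t + ‖T‖) / 2 by linarith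
  refine T.opNorm_le_of_unit_norm (by positivity) fun x hx ↦ ?_
  have hx2 : ‖(2 : 𝕜) • x‖ = 2 := by rw [norm_smul, RCLike.norm_two, hx, mul_one]
  obtain ⟨v, hv, hxv⟩ := exists_mem_norm_sub_le_of_isCover_closedBall hN hx2.le
  have h2 : 2 * ‖T x‖ ≤ t + ‖T‖ := calc
    2 * ‖T x‖ = ‖T v + T ((2 : 𝕜) • x - v)‖ := by
      rw [← map_add, add_sub_cancel, map_smul, norm_smul, RCLike.norm_two]
    _ ≤ ‖T v‖ + ‖T ((2 : 𝕜) • x - v)‖ := norm_add_le _ _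
    _ ≤ t + ‖T‖ := add_le_add (h v hv) (T.le_of_opNorm_le_of_le le_rfl hxv |>.trans_eq (mul_one _))
  linarith

lemma norm_clm_le_of_isCover_of_re_inner_le {E F : Type*} [NormedAddCommGroup E] [NormedSpace 𝕜 E]
    [NormedAddCommGroup F] [InnerProductSpace 𝕜 F] {M : Set F} {N : Set E}
    (hM : IsCover 1 (closedBall 0 2) M) (hN : IsCover 1 (closedBall 0 2) N) {T : E →L[𝕜] F} {t : ℝ}
    (ht : 0 ≤ t) (h : ∀ u ∈ M, ∀ v ∈ N, RCLike.re ⟪u, T v⟫_𝕜 ≤ t) : ‖T‖ ≤ t :=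
  norm_clm_le_of_isCover hN ht fun v hv ↦
    norm_le_of_isCover_of_re_inner_le hM fun u hu ↦ h u hu v hv

end NormFromNet

section HilbertSchmidt

variable {𝕜 m n : Type*} [RCLike 𝕜] [Fintype m] [Fintype n]

lemma inner_toLp_vec (A B : Matrix m n 𝕜) :
    ⟪toLp 2 A.vec, toLp 2 B.vec⟫_𝕜 = (Aᴴ * B).trace := by
  rw [EuclideanSpace.inner_toLp_toLp, dotProduct_comm, star_vec_dotProduct_vec]

lemma inner_toLp_vec_vecMulVec [DecidableEq n] (A : Matrix m n 𝕜)
    (u : EuclideanSpace 𝕜 m) (v : EuclideanSpace 𝕜 n) :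
    ⟪toLp 2 (vecMulVec u (star v)).vec, toLp 2 A.vec⟫_𝕜 = ⟪u, toEuclideanLin A v⟫_𝕜 := by
  rw [inner_toLp_vec, conjTranspose_vecMulVec, star_star, trace_mul_comm, mul_vecMulVec,
    trace_vecMulVec, EuclideanSpace.inner_eq_star_dotProduct, ofLp_toLpLin, toLin'_apply]

lemma norm_toLp_vec_vecMulVec (u : EuclideanSpace 𝕜 m) (v : EuclideanSpace 𝕜 n) :
    ‖toLp 2 (vecMulVec u (star v)).vec‖ = ‖u‖ * ‖v‖ := by
  rw [← sq_eq_sq₀ (by positivity) (by positivity), mul_pow]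
  simp only [EuclideanSpace.norm_sq_eq, vec, vecMulVec_apply, Pi.star_apply, RCLike.star_def,
    norm_mul, RCLike.norm_conj, mul_pow, Fintype.sum_prod_type, Finset.sum_mul_sum]
  rw [Finset.sum_comm]

lemma sum_norm_inner_toEuclideanLin_sq_le [DecidableEq n] {ι : Type*} [Fintype ι] [DecidableEq ι]
    {V : ι → Matrix m n 𝕜} (hV : ∀ i j, ((V i)ᴴ * V j).trace = if i = j then 1 else 0)
    (u : EuclideanSpace 𝕜 m) (v : EuclideanSpace 𝕜 n) :
    ∑ i, ‖⟪u, toEuclideanLin (V i) v⟫_𝕜‖ ^ 2 ≤ (‖u‖ * ‖v‖) ^ 2 := by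
  have horth : Orthonormal 𝕜 fun i ↦ toLp 2 (V i).vec :=
    orthonormal_iff_ite.2 fun i j ↦ (inner_toLp_vec _ _).trans (hV i j)
  simpa only [norm_inner_symm (toLp 2 (V _).vec), inner_toLp_vec_vecMulVec,
    norm_toLp_vec_vecMulVec] using
    horth.sum_inner_products_le (toLp 2 (vecMulVec u (star v)).vec) (s := Finset.univ)

end HilbertSchmidt

section SubGaussian

variable {Ω ι : Type*} {mΩ : MeasurableSpace Ω} {μ : Measure Ω} [Fintype ι] {X : ι → Ω → ℝ}

lemma hasSubgaussianMGF_mono {Y : Ω → ℝ} {c c' : ℝ≥0} (h : HasSubgaussianMGF Y c μ)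
    (hc : c ≤ c') : HasSubgaussianMGF Y c' μ where
  integrable_exp_mul := h.integrable_exp_mul
  mgf_le t := (h.mgf_le t).trans (by gcongr)

lemma hasSubgaussianMGF_sum_mul (hX : iIndepFun X μ) {c : ℝ≥0}
    (hc : ∀ i, HasSubgaussianMGF (X i) c μ) {a : ι → ℝ} {S : ℝ≥0} (ha : ∑ i, a i ^ 2 ≤ S) :
    HasSubgaussianMGF (fun ω ↦ ∑ i, a i * X i ω) (S * c) μ := by
  have hindep : iIndepFun (fun i ω ↦ a i * X i ω) μ :=
    hX.comp (fun i x ↦ a i * x) fun i ↦ measurable_const_mul (a i)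
  have hterm (i : ι) : HasSubgaussianMGF (fun ω ↦ a i * X i ω) (‖a i‖₊ ^ 2 * c) μ := by
    have hsq : ‖a i‖₊ ^ 2 = ⟨a i ^ 2, sq_nonneg (a i)⟩ := NNReal.eq (sq_abs (a i))
    exact hsq ▸ (hc i).const_mul (a i)
  have hle : ∑ i, ‖a i‖₊ ^ 2 ≤ S := by
    rw [← NNReal.coe_le_coe]
    simpa using ha
  exact hasSubgaussianMGF_mono (.sum_of_iIndepFun hindep fun i _ ↦ hterm i)
    ((Finset.sum_mul _ _ _).symm.trans_le (mul_le_mul_left hle c))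

variable [DecidableEq ι] {m n : ℕ} {V : ι → Matrix (Fin m) (Fin n) ℂ}

lemma hasSubgaussianMGF_re_inner_sum_smul
    (hV : ∀ i j, ((V i)ᴴ * V j).trace = if i = j then 1 else 0) (hX : iIndepFun X μ) {c : ℝ≥0}
    (hc : ∀ i, HasSubgaussianMGF (X i) c μ)
    (u : EuclideanSpace ℂ (Fin m)) (v : EuclideanSpace ℂ (Fin n)) :
    HasSubgaussianMGF (fun ω ↦ (⟪u, toEuclideanLin (∑ i, (X i ω : ℂ) • V i) v⟫_ℂ).re)
      ((‖u‖₊ * ‖v‖₊) ^ 2 * c) μ := by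
  have hlinear (ω : Ω) : (⟪u, toEuclideanLin (∑ i, (X i ω : ℂ) • V i) v⟫_ℂ).re =
      ∑ i, (⟪u, toEuclideanLin (V i) v⟫_ℂ).re * X i ω := by
    simp only [map_sum, map_smul, LinearMap.sum_apply, LinearMap.smul_apply, inner_sum,
      inner_smul_right, Complex.re_sum, Complex.re_ofReal_mul, mul_comm]
  simp only [hlinear]
  refine hasSubgaussianMGF_sum_mul hX hc ?_
  calc ∑ i, (⟪u, toEuclideanLin (V i) v⟫_ℂ).re ^ 2
      ≤ ∑ i, ‖⟪u, toEuclideanLin (V i) v⟫_ℂ‖ ^ 2 :=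
        Finset.sum_le_sum fun i _ ↦ sq_le_sq' (neg_le_of_abs_le (Complex.abs_re_le_norm _))
          (Complex.re_le_norm _)
    _ ≤ (‖u‖ * ‖v‖) ^ 2 := sum_norm_inner_toEuclideanLin_sq_le hV u v

lemma measureReal_lt_opNorm_sum_smul_le
    (hV : ∀ i j, ((V i)ᴴ * V j).trace = if i = j then 1 else 0) (hX : iIndepFun X μ) {c : ℝ≥0}
    (hc : ∀ i, HasSubgaussianMGF (X i) c μ) {t : ℝ} (ht : 0 ≤ t) :
    μ.real {ω | t < opNorm (∑ i, (X i ω : ℂ) • V i)} ≤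
      5 ^ (2 * (m + n)) * Real.exp (-t ^ 2 / (32 * c)) := by
  have := hX.isProbabilityMeasure
  obtain ⟨M, hM2, hM, hMcard⟩ := exists_finset_isCover_closedBall_two (EuclideanSpace ℂ (Fin m))
  obtain ⟨N, hN2, hN, hNcard⟩ := exists_finset_isCover_closedBall_two (EuclideanSpace ℂ (Fin n))
  rw [finrank_real_of_complex, finrank_euclideanSpace_fin] at hMcard hNcard
  let B (p : EuclideanSpace ℂ (Fin m) × EuclideanSpace ℂ (Fin n)) : Set Ω :=
    {ω | t ≤ (⟪p.1, toEuclideanLin (∑ i, (X i ω : ℂ) • V i) p.2⟫_ℂ).re}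
  have hsubset : {ω | t < opNorm (∑ i, (X i ω : ℂ) • V i)} ⊆ ⋃ p ∈ M ×ˢ N, B p := by
    intro ω hω
    contrapose! hω
    simp only [Set.mem_iUnion, not_exists] at hω
    exact not_lt.2 <| norm_clm_le_of_isCover_of_re_inner_le hM hN ht fun u hu v hv ↦
      (not_le.1 (hω (u, v) (Finset.mk_mem_product hu hv))).le
  have hB : ∀ p ∈ M ×ˢ N, μ.real (B p) ≤ Real.exp (-t ^ 2 / (32 * c)) := by
    intro p hp
    obtain ⟨hu, hv⟩ := Finset.mem_product.1 hp
    have hvariance : (‖p.1‖₊ * ‖p.2‖₊) ^ 2 * c ≤ (2 * 2) ^ 2 * c := by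
      gcongr
      exacts [hM2 _ hu, hN2 _ hv]
    refine ((hasSubgaussianMGF_mono (hasSubgaussianMGF_re_inner_sum_smul hV hX hc p.1 p.2)
      hvariance).measure_ge_le ht).trans_eq ?_
    push_cast
    ring_nf
  calc μ.real {ω | t < opNorm (∑ i, (X i ω : ℂ) • V i)}
      ≤ ∑ p ∈ M ×ˢ N, μ.real (B p) :=
        (measureReal_mono hsubset (measure_ne_top μ _)).trans (measureReal_biUnion_finset_le _ _)
    _ ≤ (M.card * N.card : ℕ) * Real.exp (-t ^ 2 / (32 * c)) := by
        rw [← Finset.card_product, ← nsmul_eq_mul]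
        exact Finset.sum_le_card_nsmul _ _ _ hB
    _ ≤ 5 ^ (2 * (m + n)) * Real.exp (-t ^ 2 / (32 * c)) := by
        gcongr
        rw [mul_add, pow_add]
        exact_mod_cast Nat.mul_le_mul hMcard hNcard

end SubGaussian

section RandomSigns

lemma card_filter_div_card_eq_uniformOn_real {Ω : Type*} [Fintype Ω] [MeasurableSpace Ω]
    [MeasurableSingletonClass Ω] (p : Ω → Prop) [DecidablePred p] :
    ((Finset.univ.filter p).card : ℝ) / Fintype.card Ω = (uniformOn Set.univ).real {ω | p ω} := by
  rw [Measure.real, uniformOn_univ, ENNReal.toReal_div, ENNReal.toReal_natCast,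
    ← Finset.coe_filter_univ, Measure.count_apply_finset, ENNReal.toReal_natCast]

lemma integral_sign_uniformOn_univ : ∫ b, sign b ∂uniformOn Set.univ = 0 := by
  have hhalf (b : Bool) : (uniformOn Set.univ).real {b} = 1 / 2 := by
    simp only [Measure.real, uniformOn_univ, Measure.count_singleton, Fintype.card_bool]
    norm_num
  rw [integral_fintype .of_finite, Fintype.sum_bool, hhalf, hhalf]
  norm_num [sign]

lemma hasSubgaussianMGF_sign : HasSubgaussianMGF sign 1 (uniformOn Set.univ) := by
  have hmem (b : Bool) : sign b ∈ Set.Icc (-1) 1 := by cases b <;> simp [sign]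
  have h := hasSubgaussianMGF_of_mem_Icc_of_integral_eq_zero
    (measurable_of_finite sign).aemeasurable (.of_forall hmem) integral_sign_uniformOn_univ
  rwa [show ((‖(1 : ℝ) - -1‖₊ / 2) ^ 2 : ℝ≥0) = 1 by norm_num] at h

lemma uniformOn_univ_eq_pi {ι α : Type*} [Fintype ι] [Finite α] [MeasurableSpace α]
    [MeasurableSingletonClass α] :
    uniformOn (Set.univ : Set (ι → α)) = Measure.pi fun _ ↦ uniformOn Set.univ := by
  rw [← Set.pi_univ Set.univ, uniformOn_pi]

variable {ι : Type*} [Finite ι]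

lemma hasSubgaussianMGF_sign_apply (i : ι) :
    HasSubgaussianMGF (fun z : ι → Bool ↦ sign (z i)) 1 (uniformOn Set.univ) := by
  cases nonempty_fintype ι
  have heval := measurePreserving_eval (fun _ : ι ↦ uniformOn (Set.univ : Set Bool)) i
  rw [uniformOn_univ_eq_pi]
  exact .of_map heval.aemeasurable (heval.map_eq ▸ hasSubgaussianMGF_sign)

lemma iIndepFun_sign_apply :
    iIndepFun (fun i (z : ι → Bool) ↦ sign (z i)) (uniformOn Set.univ) := by
  cases nonempty_fintype ι
  rw [uniformOn_univ_eq_pi]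
  exact iIndepFun_pi fun _ ↦ (measurable_of_finite sign).aemeasurable

end RandomSigns

/-- The constant `κ_α` of the concentration inequality. It makes the deviation exponent
`κ_α² / 32` exceed by `α` the entropy `4 log 5` per dimension of a pair of nets. -/
def concentrationConst (α : ℝ) : ℝ := √(32 * (α + 4 * Real.log 5))

lemma concentrationConst_pos {α : ℝ} (hα : 0 ≤ α) : 0 < concentrationConst α := by
  have := Real.log_pos (show (1 : ℝ) < 5 by norm_num)
  exact Real.sqrt_pos.2 (by positivity)

lemma five_pow_mul_exp_neg_concentrationConst_sq {α : ℝ} (hα : 0 ≤ α) (k : ℕ) :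
    5 ^ (2 * k) * Real.exp (-(concentrationConst α * √(k / 2)) ^ 2 / 32) =
      Real.exp (-α * (k / 2)) := by
  have := Real.log_nonneg (show (1 : ℝ) ≤ 5 by norm_num)
  have hpow : (5 : ℝ) ^ (2 * k) = Real.exp (2 * k * Real.log 5) := by
    rw [← Real.rpow_natCast, Real.rpow_def_of_pos (by norm_num), mul_comm]
    push_cast
    rfl
  rw [hpow, ← Real.exp_add, mul_pow, concentrationConst, Real.sq_sqrt (by positivity),
    Real.sq_sqrt (by positivity)]
  ring_nf

theorem opNorm_concentration_general {Ω ι : Type*} {mΩ : MeasurableSpace Ω} {μ : Measure Ω}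
    [Fintype ι] [DecidableEq ι] {X : ι → Ω → ℝ} (hX : iIndepFun X μ)
    (hsub : ∀ i, HasSubgaussianMGF (X i) 1 μ) {m n : ℕ} {V : ι → Matrix (Fin m) (Fin n) ℂ}
    (hV : ∀ i j, ((V i)ᴴ * V j).trace = if i = j then 1 else 0) {α : ℝ} (hα : 0 ≤ α) :
    μ.real {ω | concentrationConst α * √((m + n : ℕ) / 2) < opNorm (∑ i, (X i ω : ℂ) • V i)} ≤
      Real.exp (-α * ((m + n : ℕ) / 2)) := by
  rw [← five_pow_mul_exp_neg_concentrationConst_sq hα]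
  simpa only [NNReal.coe_one, mul_one] using measureReal_lt_opNorm_sum_smul_le hV hX hsub
    (mul_nonneg (concentrationConst_pos hα).le (Real.sqrt_nonneg _))

/-- Concentration of the operator norm of a random `±1` combination of an orthonormal
basis of `ℂ^{d×d}`: for every `α > 0` there is `κ_α > 0` such that for every orthonormal
basis `V_1, …, V_{d²}` (w.r.t. the Hilbert–Schmidt inner product), every `1 ≤ ℓ ≤ d²`
and uniformly random independent signs `z`, the matrix `W = ∑_{i<ℓ} z_i V_i` satisfies
`P(‖W‖_op > κ_α √d) ≤ 2 exp(−α d)`. -/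
theorem opNorm_concentration :
    ∀ α : ℝ, 0 < α → ∃ κ : ℝ, 0 < κ ∧
      ∀ d : ℕ, 1 ≤ d →
      ∀ V : Fin (d ^ 2) → Matrix (Fin d) (Fin d) ℂ,
      (∀ i j, ((V i)ᴴ * V j).trace = if i = j then 1 else 0) →
      ∀ ℓ : ℕ, 1 ≤ ℓ → ∀ hℓ : ℓ ≤ d ^ 2,
      ((Finset.univ.filter (fun z : Fin ℓ → Bool =>
          κ * Real.sqrt d <
            opNorm (∑ i : Fin ℓ, (sign (z i) : ℂ) • V (Fin.castLE hℓ i)))).card : ℝ)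
          / 2 ^ ℓ
        ≤ 2 * Real.exp (-α * d) := by
  intro α hα
  refine ⟨concentrationConst α, concentrationConst_pos hα.le, fun d _ V hV ℓ _ hℓ ↦ ?_⟩
  have horth (i j : Fin ℓ) :
      ((V (Fin.castLE hℓ i))ᴴ * V (Fin.castLE hℓ j)).trace = if i = j then 1 else 0 := by
    simp only [hV, Fin.castLE_inj]
  have hdim : ((d + d : ℕ) / 2 : ℝ) = d := by rw [Nat.cast_add, add_self_div_two]
  have hcard : (2 : ℝ) ^ ℓ = Fintype.card (Fin ℓ → Bool) := by simp
  have h := opNorm_concentration_general iIndepFun_sign_apply hasSubgaussianMGF_sign_apply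
    horth hα.le
  rw [hdim, ← card_filter_div_card_eq_uniformOn_real, ← hcard] at h
  exact h.trans (le_mul_of_one_le_left (Real.exp_pos _).le one_le_two)

end
end

section
/- There is a universal constant c' > 0 (one may take c' = 3(ln 2)²/8) such that: for every d ≥ 1, every orthonormal basis V_1, …, V_{d²} of ℂ^{d×d} with respect to the Hilbert–Schmidt inner product, every integer 1 ≤ ℓ ≤ d², independent uniformly random signs z_1, …, z_ℓ ∈ {−1, 1}, every fixed unit vector x ∈ ℂ^d, and every s > 0, the random matrix W = ∑_{i=1}^ℓ z_i V_i satisfies P(‖W x‖₂ ≥ (1 + s)√d) ≤ 2 exp(−c' s² d). -/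
open Matrix BigOperators

noncomputable section

/-- The Euclidean (`ℓ²`) norm of a vector in `ℂ^d`. -/
def euclNorm {d : ℕ} (v : Fin d → ℂ) : ℝ := Real.sqrt (∑ i, ‖v i‖ ^ 2)

/-!
Let `u i = V i x` and `W z = ∑ i, z i • u i`. Orthonormality of the `V i` makes the `u i` a Bessel
family: `∑ i, |⟪u i, y⟫|² ≤ ‖y‖²` for all `y`, hence `∑ i, ‖u i‖² ≤ d`.

The tail of `‖W‖` is controlled through `φ t = 𝔼 exp (t ‖W‖²)` by a discrete version of Gaussian
integration by parts. Its derivative is `φ' t = ∑ i, 𝔼 (z i ⟪u i, W⟫ exp (t ‖W‖²))`; averaging the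
`i`-th term over the two values of `z i` bounds it by `𝔼 ((‖u i‖² + 2 t ⟪u i, W⟫²) exp (t ‖W‖²))`.
Summing over `i`, the Bessel inequality gives `φ' ≤ d φ + 2 t φ'`, so `φ t ≤ exp (t d / (1 - 2 t))`
by Grönwall. Chernoff's bound at `t = s / (2 (1 + s))` yields the constant `c' = 1 / 2`.
-/

open scoped RealInnerProductSpace

section TwoPoint

lemma sinh_le_mul_cosh {x : ℝ} (hx : 0 ≤ x) : Real.sinh x ≤ x * Real.cosh x := by
  have h := (convex_Icc 0 x).image_sub_le_mul_sub_of_deriv_le (f := Real.sinh) (C := Real.cosh x)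
    Real.continuous_sinh.continuousOn Real.differentiable_sinh.differentiableOn
    (fun y hy => by
      rw [interior_Icc] at hy
      rw [Real.deriv_sinh, Real.cosh_le_cosh, abs_of_pos hy.1, abs_of_nonneg hx]
      exact hy.2.le)
    0 (Set.left_mem_Icc.mpr hx) x (Set.right_mem_Icc.mpr hx) hx
  simpa [mul_comm] using h

lemma mul_sinh_mul_nonneg {c : ℝ} (hc : 0 ≤ c) (a : ℝ) : 0 ≤ a * Real.sinh (c * a) := by
  wlog ha : 0 ≤ a generalizing a
  · simpa using this (-a) (by linarith)
  · exact mul_nonneg ha (Real.sinh_nonneg_iff.mpr (mul_nonneg hc ha))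

lemma mul_sinh_mul_le {c : ℝ} (hc : 0 ≤ c) (a : ℝ) :
    a * Real.sinh (c * a) ≤ c * a ^ 2 * Real.cosh (c * a) := by
  wlog ha : 0 ≤ a generalizing a
  · simpa using this (-a) (by linarith)
  · calc a * Real.sinh (c * a) ≤ a * (c * a * Real.cosh (c * a)) :=
        mul_le_mul_of_nonneg_left (sinh_le_mul_cosh (mul_nonneg hc ha)) ha
      _ = c * a ^ 2 * Real.cosh (c * a) := by ring

variable {E : Type*} [NormedAddCommGroup E] [InnerProductSpace ℝ E]

lemma exp_mul_norm_add_sq (t : ℝ) (v u : E) :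
    Real.exp (t * ‖v + u‖ ^ 2) =
      Real.exp (t * (‖v‖ ^ 2 + ‖u‖ ^ 2)) *
        (Real.cosh (2 * t * ⟪u, v⟫) + Real.sinh (2 * t * ⟪u, v⟫)) := by
  rw [Real.cosh_add_sinh, ← Real.exp_add, norm_add_sq_real, real_inner_comm]
  ring_nf

lemma inner_mul_exp_add_inner_mul_exp_le {t : ℝ} (ht : 0 ≤ t) (v u : E) :
    ⟪u, v + u⟫ * Real.exp (t * ‖v + u‖ ^ 2) + ⟪-u, v - u⟫ * Real.exp (t * ‖v - u‖ ^ 2) ≤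
      (‖u‖ ^ 2 + 2 * t * ⟪u, v + u⟫ ^ 2) * Real.exp (t * ‖v + u‖ ^ 2) +
        (‖u‖ ^ 2 + 2 * t * ⟪u, v - u⟫ ^ 2) * Real.exp (t * ‖v - u‖ ^ 2) := by
  have h_sub := exp_mul_norm_add_sq t v (-u)
  rw [← sub_eq_add_neg, norm_neg, inner_neg_left, mul_neg, Real.cosh_neg, Real.sinh_neg] at h_sub
  rw [exp_mul_norm_add_sq, h_sub]
  simp only [inner_add_right, inner_sub_right, inner_neg_left, real_inner_self_eq_norm_sq]
  set a : ℝ := ⟪u, v⟫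
  set b : ℝ := ‖u‖ ^ 2
  set C : ℝ := Real.cosh (2 * t * a)
  set S : ℝ := Real.sinh (2 * t * a)
  have hc : 0 ≤ 2 * t := by positivity
  have h_upper : a * S ≤ 2 * t * a ^ 2 * C := mul_sinh_mul_le hc a
  have h_lower : 0 ≤ a * S := mul_sinh_mul_nonneg hc a
  have h_diff : 0 ≤ (2 * t * a ^ 2 * C - a * S) + 4 * t * b * (a * S) + 2 * t * b ^ 2 * C :=
    add_nonneg (add_nonneg (sub_nonneg.mpr h_upper) (by positivity)) (by positivity)
  rw [← sub_nonneg]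
  calc 0 ≤ 2 * Real.exp (t * (‖v‖ ^ 2 + b)) *
        ((2 * t * a ^ 2 * C - a * S) + 4 * t * b * (a * S) + 2 * t * b ^ 2 * C) :=
      mul_nonneg (by positivity) h_diff
    _ = _ := by ring

end TwoPoint

section SignFlip

variable {ι : Type*} [DecidableEq ι]

/-- Flipping the `i`-th coordinate of the Boolean cube, the involution over which a sum over all
sign patterns is averaged. -/
def flipAt (i : ι) (z : ι → Bool) : ι → Bool := Function.update z i (!z i)

lemma flipAt_involutive (i : ι) : Function.Involutive (flipAt i) := fun z => by simp [flipAt]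

lemma sum_comp_flipAt [Fintype ι] (i : ι) (f : (ι → Bool) → ℝ) :
    ∑ z, f (flipAt i z) = ∑ z, f z :=
  Equiv.sum_comp (flipAt_involutive i).toPerm f

lemma sum_le_sum_of_add_flipAt_le [Fintype ι] (i : ι) {f g : (ι → Bool) → ℝ}
    (h : ∀ z, f z + f (flipAt i z) ≤ g z + g (flipAt i z)) : ∑ z, f z ≤ ∑ z, g z := by
  have h_sum := Finset.sum_le_sum fun z (_ : z ∈ Finset.univ) => h z
  simp only [Finset.sum_add_distrib, sum_comp_flipAt] at h_sum
  linarith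

lemma sign_not (b : Bool) : sign (!b) = -sign b := by cases b <;> simp [sign]

lemma sign_sq (b : Bool) : sign b ^ 2 = 1 := by cases b <;> simp [sign]

lemma norm_sign (b : Bool) : ‖sign b‖ = 1 := by cases b <;> simp [sign]

end SignFlip

section RademacherSum

variable {ι E : Type*} [Fintype ι] [NormedAddCommGroup E] [InnerProductSpace ℝ E]

/-- The Rademacher sum of the vectors `u i` with signs prescribed by `z`; a random sign pattern is
a uniformly distributed point of `ι → Bool`, so expectations are sums over `z` up to the factor
`2 ^ |ι|`. -/
def rademacherSum (u : ι → E) (z : ι → Bool) : E := ∑ i, sign (z i) • u i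

lemma inner_rademacherSum_left (u : ι → E) (z : ι → Bool) (y : E) :
    ⟪rademacherSum u z, y⟫ = ∑ i, sign (z i) * ⟪u i, y⟫ := by
  simp [rademacherSum, sum_inner, real_inner_smul_left]

variable [DecidableEq ι]

lemma rademacherSum_flipAt (u : ι → E) (i : ι) (z : ι → Bool) :
    rademacherSum u (flipAt i z) = rademacherSum u z - (2 * sign (z i)) • u i := by
  simp only [rademacherSum, ← Finset.add_sum_erase _ _ (Finset.mem_univ i)]
  have h_rest : ∑ j ∈ Finset.univ.erase i, sign (flipAt i z j) • u j =
      ∑ j ∈ Finset.univ.erase i, sign (z j) • u j :=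
    Finset.sum_congr rfl fun j hj => by simp [flipAt, Finset.ne_of_mem_erase hj]
  rw [h_rest, flipAt, Function.update_self, sign_not]
  module

lemma sum_sign_mul_inner_mul_exp_le {t : ℝ} (ht : 0 ≤ t) (u : ι → E) (i : ι) :
    ∑ z, sign (z i) * ⟪u i, rademacherSum u z⟫ * Real.exp (t * ‖rademacherSum u z‖ ^ 2) ≤
      ∑ z, (‖u i‖ ^ 2 + 2 * t * ⟪u i, rademacherSum u z⟫ ^ 2) *
        Real.exp (t * ‖rademacherSum u z‖ ^ 2) := by
  refine sum_le_sum_of_add_flipAt_le i fun z => ?_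
  have h := inner_mul_exp_add_inner_mul_exp_le ht
    (rademacherSum u z - sign (z i) • u i) (sign (z i) • u i)
  have h_flip : rademacherSum u z - sign (z i) • u i - sign (z i) • u i =
      rademacherSum u (flipAt i z) := by
    rw [rademacherSum_flipAt]
    module
  rw [h_flip, sub_add_cancel] at h
  have h_sign : sign (flipAt i z i) = -sign (z i) := by simp [flipAt, sign_not]
  simpa only [h_sign, inner_neg_left, real_inner_smul_left, norm_smul, norm_sign, one_mul, mul_pow,
    sign_sq, neg_mul] using h

lemma sum_norm_sq_mul_exp_rademacherSum_le {u : ι → E}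
    (hu : ∀ y, ∑ i, ⟪u i, y⟫ ^ 2 ≤ ‖y‖ ^ 2) {t : ℝ} (ht : 0 ≤ t) :
    (1 - 2 * t) * ∑ z, ‖rademacherSum u z‖ ^ 2 * Real.exp (t * ‖rademacherSum u z‖ ^ 2) ≤
      (∑ i, ‖u i‖ ^ 2) * ∑ z, Real.exp (t * ‖rademacherSum u z‖ ^ 2) := by
  set W := rademacherSum u
  have h : ∑ z, ‖W z‖ ^ 2 * Real.exp (t * ‖W z‖ ^ 2) ≤
      (∑ i, ‖u i‖ ^ 2) * ∑ z, Real.exp (t * ‖W z‖ ^ 2) +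
        2 * t * ∑ z, ‖W z‖ ^ 2 * Real.exp (t * ‖W z‖ ^ 2) := calc
    _ = ∑ i, ∑ z, sign (z i) * ⟪u i, W z⟫ * Real.exp (t * ‖W z‖ ^ 2) := by
      rw [Finset.sum_comm]
      refine Finset.sum_congr rfl fun z _ => ?_
      rw [← Finset.sum_mul, ← inner_rademacherSum_left, real_inner_self_eq_norm_sq]
    _ ≤ ∑ i, ∑ z, (‖u i‖ ^ 2 + 2 * t * ⟪u i, W z⟫ ^ 2) * Real.exp (t * ‖W z‖ ^ 2) :=
      Finset.sum_le_sum fun i _ => sum_sign_mul_inner_mul_exp_le ht u i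
    _ = ∑ z, (∑ i, ‖u i‖ ^ 2 + 2 * t * ∑ i, ⟪u i, W z⟫ ^ 2) * Real.exp (t * ‖W z‖ ^ 2) := by
      rw [Finset.sum_comm]
      simp only [← Finset.sum_mul, Finset.sum_add_distrib, ← Finset.mul_sum]
    _ ≤ ∑ z, (∑ i, ‖u i‖ ^ 2 + 2 * t * ‖W z‖ ^ 2) * Real.exp (t * ‖W z‖ ^ 2) := by
      gcongr with z
      exact hu (W z)
    _ = _ := by
      simp only [add_mul, Finset.sum_add_distrib, Finset.mul_sum, mul_assoc]
  linarith

lemma sum_exp_norm_sq_rademacherSum_le {u : ι → E}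
    (hu : ∀ y, ∑ i, ⟪u i, y⟫ ^ 2 ≤ ‖y‖ ^ 2) {t : ℝ} (ht : 0 ≤ t) (ht' : 2 * t < 1) :
    ∑ z, Real.exp (t * ‖rademacherSum u z‖ ^ 2) ≤
      2 ^ Fintype.card ι * Real.exp (t / (1 - 2 * t) * ∑ i, ‖u i‖ ^ 2) := by
  set W := rademacherSum u
  set S := ∑ i, ‖u i‖ ^ 2
  set φ : ℝ → ℝ := fun r => ∑ z, Real.exp (r * ‖W z‖ ^ 2)
  set φ' : ℝ → ℝ := fun r => ∑ z, ‖W z‖ ^ 2 * Real.exp (r * ‖W z‖ ^ 2)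
  have hφ_nonneg (r : ℝ) : 0 ≤ φ r := by positivity
  have hφ'_nonneg (r : ℝ) : 0 ≤ φ' r := by positivity
  have hφ (r : ℝ) : HasDerivAt φ (φ' r) r := by
    refine HasDerivAt.fun_sum fun z _ => ?_
    simpa [mul_comm] using ((hasDerivAt_id r).mul_const (‖W z‖ ^ 2)).exp
  have hφ_zero : φ 0 = 2 ^ Fintype.card ι := by simp [φ]
  have h_bound : ∀ r ∈ Set.Ico 0 t, ‖φ' r‖ ≤ S / (1 - 2 * t) * ‖φ r‖ + 0 := by
    intro r ⟨hr, hrt⟩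
    rw [Real.norm_of_nonneg (hφ'_nonneg r), Real.norm_of_nonneg (hφ_nonneg r), add_zero,
      div_mul_eq_mul_div, le_div_iff₀' (by linarith)]
    calc (1 - 2 * t) * φ' r ≤ (1 - 2 * r) * φ' r := by gcongr
      _ ≤ S * φ r := sum_norm_sq_mul_exp_rademacherSum_le hu hr
  have h := norm_le_gronwallBound_of_norm_deriv_right_le
    (fun r _ => (hφ r).continuousAt.continuousWithinAt) (fun r _ => (hφ r).hasDerivWithinAt)
    (by rw [Real.norm_of_nonneg (hφ_nonneg 0), hφ_zero]) h_bound t (Set.right_mem_Icc.mpr ht)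
  rw [gronwallBound_ε0, Real.norm_of_nonneg (hφ_nonneg t), sub_zero] at h
  convert h using 3
  ring

theorem card_filter_le_norm_rademacherSum_div_le {u : ι → E}
    (hu : ∀ y, ∑ i, ⟪u i, y⟫ ^ 2 ≤ ‖y‖ ^ 2) {S : ℝ} (hS : ∑ i, ‖u i‖ ^ 2 ≤ S) {s : ℝ}
    (hs : 0 ≤ s) :
    ((Finset.univ.filter fun z => (1 + s) * Real.sqrt S ≤ ‖rademacherSum u z‖).card : ℝ) /
      2 ^ Fintype.card ι ≤ Real.exp (-(1 / 2) * s ^ 2 * S) := by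
  have hS_nonneg : 0 ≤ S := le_trans (by positivity) hS
  set A := Finset.univ.filter fun z => (1 + s) * Real.sqrt S ≤ ‖rademacherSum u z‖
  set t := s / (2 * (1 + s)) with ht_def
  have ht : 0 ≤ t := by positivity
  have ht_sub : 1 - 2 * t = 1 / (1 + s) := by rw [ht_def]; field_simp; ring
  have ht_lt : 0 < 1 - 2 * t := by rw [ht_sub]; positivity
  have h_markov : A.card * Real.exp (t * ((1 + s) ^ 2 * S)) ≤
      2 ^ Fintype.card ι * Real.exp (t / (1 - 2 * t) * S) := calc
    _ = A.card • Real.exp (t * ((1 + s) * Real.sqrt S) ^ 2) := by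
      rw [nsmul_eq_mul, mul_pow, Real.sq_sqrt hS_nonneg]
    _ ≤ ∑ z ∈ A, Real.exp (t * ‖rademacherSum u z‖ ^ 2) :=
      Finset.card_nsmul_le_sum _ _ _ fun z hz => by
        have := (Finset.mem_filter.mp hz).2
        gcongr
    _ ≤ ∑ z, Real.exp (t * ‖rademacherSum u z‖ ^ 2) :=
      Finset.sum_le_univ_sum_of_nonneg fun z => (Real.exp_pos _).le
    _ ≤ 2 ^ Fintype.card ι * Real.exp (t / (1 - 2 * t) * ∑ i, ‖u i‖ ^ 2) :=
      sum_exp_norm_sq_rademacherSum_le hu ht (by linarith)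
    _ ≤ _ := by gcongr
  have h_exponent : t / (1 - 2 * t) * S = -(1 / 2) * s ^ 2 * S + t * ((1 + s) ^ 2 * S) := by
    rw [ht_sub, ht_def]
    field_simp
    ring
  rw [h_exponent, Real.exp_add, ← mul_assoc (2 ^ _)] at h_markov
  rw [div_le_iff₀' (by positivity)]
  exact le_of_mul_le_mul_right h_markov (Real.exp_pos _)

end RademacherSum

section Bessel

lemma sum_norm_sq_le_card_of_bessel {𝕜 E ι κ : Type*} [RCLike 𝕜] [NormedAddCommGroup E]
    [InnerProductSpace 𝕜 E] [Fintype ι] [Fintype κ] (b : OrthonormalBasis κ 𝕜 E) {u : ι → E}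
    (hu : ∀ y, ∑ i, ‖inner 𝕜 (u i) y‖ ^ 2 ≤ ‖y‖ ^ 2) :
    ∑ i, ‖u i‖ ^ 2 ≤ Fintype.card κ := calc
  _ = ∑ k, ∑ i, ‖inner 𝕜 (u i) (b k)‖ ^ 2 := by
    rw [Finset.sum_comm]
    exact Finset.sum_congr rfl fun i _ => (b.sum_sq_norm_inner_left (u i)).symm
  _ ≤ ∑ k, ‖b k‖ ^ 2 := Finset.sum_le_sum fun k _ => hu (b k)
  _ = Fintype.card κ := by simp

variable {𝕜 ι m n : Type*} [RCLike 𝕜] [DecidableEq ι] [Fintype m] [Fintype n]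

lemma orthonormal_toLp_vec {V : ι → Matrix m n 𝕜}
    (hV : ∀ i j, ((V i)ᴴ * V j).trace = if i = j then 1 else 0) :
    Orthonormal 𝕜 fun i => WithLp.toLp 2 (vec (V i)) := by
  rw [orthonormal_iff_ite]
  intro i j
  rw [← hV i j, ← star_vec_dotProduct_vec, EuclideanSpace.inner_toLp_toLp, dotProduct_comm]

lemma trace_conjTranspose_mul_vecMulVec (A : Matrix m n 𝕜) (y : m → 𝕜) (x : n → 𝕜) :
    (Aᴴ * vecMulVec y (star x)).trace = y ⬝ᵥ star (A *ᵥ x) := by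
  rw [mul_vecMulVec, trace_vecMulVec, star_mulVec, dotProduct_comm, dotProduct_mulVec,
    dotProduct_comm]

lemma sum_norm_inner_mulVec_sq_le [Fintype ι] {V : ι → Matrix m n 𝕜}
    (hV : ∀ i j, ((V i)ᴴ * V j).trace = if i = j then 1 else 0) (x : EuclideanSpace 𝕜 n)
    (y : EuclideanSpace 𝕜 m) :
    ∑ i, ‖inner 𝕜 (WithLp.toLp 2 (V i *ᵥ x)) y‖ ^ 2 ≤ ‖x‖ ^ 2 * ‖y‖ ^ 2 := by
  set q : EuclideanSpace 𝕜 (n × m) := WithLp.toLp 2 (vec (vecMulVec y (star x)))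
  have h_inner (i : ι) :
      inner 𝕜 (WithLp.toLp 2 (V i *ᵥ x)) y = inner 𝕜 (WithLp.toLp 2 (vec (V i))) q := by
    rw [EuclideanSpace.inner_eq_star_dotProduct, EuclideanSpace.inner_eq_star_dotProduct,
      ← trace_conjTranspose_mul_vecMulVec, ← star_vec_dotProduct_vec, dotProduct_comm]
  have h_norm : ‖q‖ ^ 2 = ‖x‖ ^ 2 * ‖y‖ ^ 2 := by
    simp only [EuclideanSpace.norm_sq_eq, q, Fintype.sum_prod_type, vec, vecMulVec_apply, norm_mul,
      mul_pow, Pi.star_apply, norm_star, Finset.sum_mul_sum]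
    exact Finset.sum_congr rfl fun j _ => Finset.sum_congr rfl fun k _ => mul_comm _ _
  simpa only [h_inner, h_norm] using (orthonormal_toLp_vec hV).sum_inner_products_le q

end Bessel

lemma euclNorm_eq_norm_toLp {d : ℕ} (v : Fin d → ℂ) : euclNorm v = ‖WithLp.toLp 2 v‖ :=
  (EuclideanSpace.norm_eq _).symm

theorem mulVec_norm_concentration_general {ι : Type*} [Fintype ι] [DecidableEq ι] {d e : ℕ}
    {V : ι → Matrix (Fin d) (Fin e) ℂ}
    (hV : ∀ i j, ((V i)ᴴ * V j).trace = if i = j then 1 else 0)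
    {x : Fin e → ℂ} (hx : euclNorm x ≤ 1) {s : ℝ} (hs : 0 ≤ s) :
    ((Finset.univ.filter (fun z : ι → Bool =>
        (1 + s) * Real.sqrt d ≤
          euclNorm ((∑ i, (sign (z i) : ℂ) • V i).mulVec x))).card : ℝ)
        / 2 ^ Fintype.card ι
      ≤ Real.exp (-(1 / 2) * s ^ 2 * d) := by
  let u (i : ι) : EuclideanSpace ℂ (Fin d) := WithLp.toLp 2 (V i *ᵥ x)
  have h_bessel (y : EuclideanSpace ℂ (Fin d)) : ∑ i, ‖inner ℂ (u i) y‖ ^ 2 ≤ ‖y‖ ^ 2 := by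
    refine (sum_norm_inner_mulVec_sq_le hV (WithLp.toLp 2 x) y).trans ?_
    rw [← euclNorm_eq_norm_toLp]
    exact mul_le_of_le_one_left (by positivity) (pow_le_one₀ (Real.sqrt_nonneg _) hx)
  have h_bessel_real (y : EuclideanSpace ℂ (Fin d)) : ∑ i, ⟪u i, y⟫ ^ 2 ≤ ‖y‖ ^ 2 := by
    refine le_trans (Finset.sum_le_sum fun i _ => ?_) (h_bessel y)
    have h_re : ⟪u i, y⟫ = (inner ℂ (u i) y).re := by
      simp [PiLp.inner_apply, Complex.inner]
    rw [h_re, sq_le_sq, abs_norm]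
    exact Complex.abs_re_le_norm _
  have h_trace : ∑ i, ‖u i‖ ^ 2 ≤ d := by
    simpa using sum_norm_sq_le_card_of_bessel (EuclideanSpace.basisFun (Fin d) ℂ) h_bessel
  have h_sum (z : ι → Bool) :
      euclNorm ((∑ i, (sign (z i) : ℂ) • V i) *ᵥ x) = ‖rademacherSum u z‖ := by
    rw [euclNorm_eq_norm_toLp]
    simp [u, rademacherSum, Matrix.sum_mulVec, Matrix.smul_mulVec]
  simpa only [h_sum] using card_filter_le_norm_rademacherSum_div_le h_bessel_real h_trace hs

/-- Fixed-vector concentration: there is a universal constant `c' > 0` such that for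
every orthonormal basis `V_1, …, V_{d²}` of `ℂ^{d×d}` (w.r.t. the Hilbert–Schmidt inner
product), every `1 ≤ ℓ ≤ d²`, uniformly random independent signs `z`, every unit vector
`x ∈ ℂ^d` and every `s > 0`, the matrix `W = ∑_{i<ℓ} z_i V_i` satisfies
`P(‖W x‖₂ ≥ (1+s)√d) ≤ 2 exp(−c' s² d)`. -/
theorem mulVec_norm_concentration :
    ∃ c' : ℝ, 0 < c' ∧
      ∀ d : ℕ, 1 ≤ d →
      ∀ V : Fin (d ^ 2) → Matrix (Fin d) (Fin d) ℂ,
      (∀ i j, ((V i)ᴴ * V j).trace = if i = j then 1 else 0) →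
      ∀ ℓ : ℕ, 1 ≤ ℓ → ∀ hℓ : ℓ ≤ d ^ 2,
      ∀ x : Fin d → ℂ, euclNorm x = 1 →
      ∀ s : ℝ, 0 < s →
      ((Finset.univ.filter (fun z : Fin ℓ → Bool =>
          (1 + s) * Real.sqrt d ≤
            euclNorm ((∑ i : Fin ℓ, (sign (z i) : ℂ) • V (Fin.castLE hℓ i)).mulVec x))).card : ℝ)
          / 2 ^ ℓ
        ≤ 2 * Real.exp (-c' * s ^ 2 * d) := by
  refine ⟨1 / 2, by norm_num, fun d _ V hV ℓ _ hℓ x hx s hs => ?_⟩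
  have h := mulVec_norm_concentration_general (V := V ∘ Fin.castLE hℓ) (by simp [hV]) hx.le hs.le
  exact (Fintype.card_fin ℓ ▸ h).trans (le_mul_of_one_le_left (Real.exp_pos _).le one_le_two)

end
end

section
/- Let d, k, n ≥ 1 and for each i = 1, …, n let ψ^i_1, …, ψ^i_k be a rank-1 POVM on ℂ^d with Lüders channel H_i; let H̄ = (1/n) ∑_{i=1}^n H_i. For a density matrix ρ let P_ρ be the product distribution on {1,…,k}^n given by P_ρ(x_1, …, x_n) = ∏_{i=1}^n ⟨ψ^i_{x_i}| ρ |ψ^i_{x_i}⟩, and let ρ_mm = I_d/d (so P_{ρ_mm}(x) > 0 for all x). Let σ be a density-matrix-valued random variable on a finite probability space and σ' an independent copy of σ, and set Δ_σ = σ − I_d/d. Then χ²(E_σ[P_σ] ‖ P_{ρ_mm}) ≤ E_{σ,σ'}[exp(n d · Tr[Δ_σ H̄(Δ_{σ'})])] − 1, where Tr[Δ_σ H̄(Δ_{σ'})] is a real number. -/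
open Matrix BigOperators
open scoped ComplexOrder

noncomputable section

/-- The Lüders channel of a rank-1 POVM given by the (not necessarily normalized)
vectors `ψ x`:  `H(X) = ∑ x, |ψ_x⟩⟨ψ_x| X |ψ_x⟩⟨ψ_x| / ⟨ψ_x, ψ_x⟩`. -/
def luders {d k : ℕ} (ψ : Fin k → Fin d → ℂ) (X : Matrix (Fin d) (Fin d) ℂ) :
    Matrix (Fin d) (Fin d) ℂ :=
  ∑ x, (star (ψ x) ⬝ᵥ ψ x)⁻¹ •
    (vecMulVec (ψ x) (star (ψ x)) * X * vecMulVec (ψ x) (star (ψ x)))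

/-!
For fixed `Q`, the correlation `χ_Q(P, P') = ∑ x, (P x - Q x) (P' x - Q x) / Q x` is a bilinear form
in `(P - Q, P' - Q)` whose diagonal is the chi-square divergence, so the divergence of a mixture is
the average of the correlations of two independent copies (the Ingster–Suslina method). Since
`1 + χ_Q(P, P') = ∑ x, P x * P' x / Q x ≥ 0` is multiplicative over product distributions, each
correlation is at most `exp (∑ i, χ_{Q i}(P i, P' i)) - 1`. For the outcomes of a rank-1 POVM and
`Q` the outcome distribution of `I / d`, that correlation is exactly `d * Tr[Δ_σ H(Δ_σ')]`.
-/

section ChiSquare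

variable {X Ω : Type*} [Fintype Ω]

/-- The mixture `E_ω[P ω]` of the distributions `P ω` with weights `w ω`. -/
def mixture (w : Ω → ℝ) (P : Ω → X → ℝ) (x : X) : ℝ := ∑ ω, w ω * P ω x

theorem mixture_sub {w : Ω → ℝ} (hw : ∑ ω, w ω = 1) (P : Ω → X → ℝ) (Q : X → ℝ) (x : X) :
    mixture w P x - Q x = ∑ ω, w ω * (P ω x - Q x) := by
  simp only [mixture, mul_sub, Finset.sum_sub_distrib, ← Finset.sum_mul, hw, one_mul]

variable [Fintype X]

/-- The chi-square divergence `χ²(P ‖ Q)`. Points with `Q x = 0` contribute `0`, so it is meaningful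
only for positive `Q`. -/
def chiSqDiv (P Q : X → ℝ) : ℝ := ∑ x, (P x - Q x) ^ 2 / Q x

/-- The chi-square correlation `χ_Q(P, P')` of `P` and `P'` relative to `Q`: the inner product of
`P / Q - 1` and `P' / Q - 1` in `L²(Q)`. -/
def chiSqCorr (Q P P' : X → ℝ) : ℝ := ∑ x, (P x - Q x) * (P' x - Q x) / Q x

theorem chiSqDiv_mixture {w : Ω → ℝ} (hw : ∑ ω, w ω = 1) (P : Ω → X → ℝ) (Q : X → ℝ) :
    chiSqDiv (mixture w P) Q = ∑ ω, ∑ ω', w ω * w ω' * chiSqCorr Q (P ω) (P ω') := by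
  calc chiSqDiv (mixture w P) Q
      = ∑ x, ∑ ω, ∑ ω', w ω * w ω' * ((P ω x - Q x) * (P ω' x - Q x) / Q x) := by
        simp only [chiSqDiv, mixture_sub hw, sq, Finset.sum_mul_sum, Finset.sum_div]
        refine Finset.sum_congr rfl fun x _ ↦ Finset.sum_congr rfl fun ω _ ↦
          Finset.sum_congr rfl fun ω' _ ↦ ?_
        ring
    _ = ∑ ω, ∑ ω', w ω * w ω' * chiSqCorr Q (P ω) (P ω') := by
        simp only [chiSqCorr, Finset.mul_sum]
        rw [Finset.sum_comm]
        exact Finset.sum_congr rfl fun ω _ ↦ Finset.sum_comm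

theorem one_add_chiSqCorr {Q P P' : X → ℝ} (hQ : ∀ x, Q x ≠ 0) (hQ1 : ∑ x, Q x = 1)
    (hP1 : ∑ x, P x = 1) (hP1' : ∑ x, P' x = 1) :
    1 + chiSqCorr Q P P' = ∑ x, P x * P' x / Q x := by
  have expand (x : X) :
      (P x - Q x) * (P' x - Q x) / Q x = P x * P' x / Q x - P x - P' x + Q x := by
    field_simp [hQ x]
    ring
  simp only [chiSqCorr, expand, Finset.sum_add_distrib, Finset.sum_sub_distrib, hQ1, hP1, hP1']
  ring

end ChiSquare

section Product

variable {ι : Type*} [Fintype ι] {X : ι → Type*} {Ω : Type*}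

/-- The density `x ↦ ∏ i, P i (x i)` of the product of the distributions `P i`. -/
def piDist (P : ∀ i, X i → ℝ) (x : ∀ i, X i) : ℝ := ∏ i, P i (x i)

variable [DecidableEq ι] [∀ i, Fintype (X i)] [Fintype Ω]

theorem sum_piDist_eq_one {P : ∀ i, X i → ℝ} (hP : ∀ i, ∑ x, P i x = 1) :
    ∑ x, piDist P x = 1 := by
  simp only [piDist, ← Fintype.prod_sum, hP, Finset.prod_const_one]

theorem one_add_chiSqCorr_piDist {Q P P' : ∀ i, X i → ℝ} (hQ : ∀ i x, Q i x ≠ 0)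
    (hQ1 : ∀ i, ∑ x, Q i x = 1) (hP1 : ∀ i, ∑ x, P i x = 1) (hP1' : ∀ i, ∑ x, P' i x = 1) :
    1 + chiSqCorr (piDist Q) (piDist P) (piDist P') =
      ∏ i, (1 + chiSqCorr (Q i) (P i) (P' i)) := by
  have hQpi (x : ∀ i, X i) : piDist Q x ≠ 0 := Finset.prod_ne_zero_iff.2 fun i _ ↦ hQ i (x i)
  rw [one_add_chiSqCorr hQpi (sum_piDist_eq_one hQ1) (sum_piDist_eq_one hP1)
    (sum_piDist_eq_one hP1')]
  simp only [one_add_chiSqCorr (hQ _) (hQ1 _) (hP1 _) (hP1' _), Fintype.prod_sum, piDist,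
    Finset.prod_div_distrib, Finset.prod_mul_distrib]

theorem one_add_chiSqCorr_piDist_le_exp {Q P P' : ∀ i, X i → ℝ} (hQ : ∀ i x, 0 < Q i x)
    (hP : ∀ i x, 0 ≤ P i x) (hP' : ∀ i x, 0 ≤ P' i x) (hQ1 : ∀ i, ∑ x, Q i x = 1)
    (hP1 : ∀ i, ∑ x, P i x = 1) (hP1' : ∀ i, ∑ x, P' i x = 1) :
    1 + chiSqCorr (piDist Q) (piDist P) (piDist P') ≤
      Real.exp (∑ i, chiSqCorr (Q i) (P i) (P' i)) := by
  have hQ0 (i : ι) (x : X i) : Q i x ≠ 0 := (hQ i x).ne'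
  have factor_nonneg (i : ι) : 0 ≤ 1 + chiSqCorr (Q i) (P i) (P' i) := by
    rw [one_add_chiSqCorr (hQ0 i) (hQ1 i) (hP1 i) (hP1' i)]
    exact Finset.sum_nonneg fun x _ ↦ div_nonneg (mul_nonneg (hP i x) (hP' i x)) (hQ i x).le
  rw [one_add_chiSqCorr_piDist hQ0 hQ1 hP1 hP1', Real.exp_sum]
  refine Finset.prod_le_prod (fun i _ ↦ factor_nonneg i) fun i _ ↦ ?_
  rw [add_comm]
  exact Real.add_one_le_exp _

theorem chiSqDiv_mixture_piDist_le {w : Ω → ℝ} (hw : ∀ ω, 0 ≤ w ω) (hw1 : ∑ ω, w ω = 1)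
    {P : Ω → ∀ i, X i → ℝ} {Q : ∀ i, X i → ℝ} (hP : ∀ ω i x, 0 ≤ P ω i x)
    (hP1 : ∀ ω i, ∑ x, P ω i x = 1) (hQ : ∀ i x, 0 < Q i x) (hQ1 : ∀ i, ∑ x, Q i x = 1) :
    chiSqDiv (mixture w fun ω ↦ piDist (P ω)) (piDist Q) ≤
      (∑ ω, ∑ ω', w ω * w ω' * Real.exp (∑ i, chiSqCorr (Q i) (P ω i) (P ω' i))) - 1 := by
  have weights_sum : ∑ ω, ∑ ω', w ω * w ω' = 1 := by
    rw [← Finset.sum_mul_sum, hw1, one_mul]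
  rw [chiSqDiv_mixture hw1, le_sub_iff_add_le]
  calc (∑ ω, ∑ ω', w ω * w ω' * chiSqCorr (piDist Q) (piDist (P ω)) (piDist (P ω'))) + 1
      = ∑ ω, ∑ ω', w ω * w ω' * (1 + chiSqCorr (piDist Q) (piDist (P ω)) (piDist (P ω'))) := by
        simp only [mul_add, mul_one, Finset.sum_add_distrib, weights_sum, add_comm]
    _ ≤ ∑ ω, ∑ ω', w ω * w ω' * Real.exp (∑ i, chiSqCorr (Q i) (P ω i) (P ω' i)) :=
        Finset.sum_le_sum fun ω _ ↦ Finset.sum_le_sum fun ω' _ ↦ mul_le_mul_of_nonneg_left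
          (one_add_chiSqCorr_piDist_le_exp hQ (hP ω) (hP ω') hQ1 (hP1 ω) (hP1 ω'))
          (mul_nonneg (hw ω) (hw ω'))

end Product

section Born

variable {κ m : Type*} [Fintype m]

/-- The Born weight `⟨ψ_x| A |ψ_x⟩`, which for a density matrix `A` is the probability of the
outcome `x`. The real part loses nothing when `A` is Hermitian. -/
def bornWeight (ψ : κ → m → ℂ) (A : Matrix m m ℂ) (x : κ) : ℝ :=
  (star (ψ x) ⬝ᵥ A *ᵥ ψ x).re

theorem ofReal_bornWeight (ψ : κ → m → ℂ) {A : Matrix m m ℂ} (hA : A.IsHermitian) (x : κ) :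
    (bornWeight ψ A x : ℂ) = star (ψ x) ⬝ᵥ A *ᵥ ψ x :=
  Complex.ext rfl (hA.im_star_dotProduct_mulVec_self (ψ x)).symm

theorem bornWeight_nonneg (ψ : κ → m → ℂ) {A : Matrix m m ℂ} (hA : A.PosSemidef) (x : κ) :
    0 ≤ bornWeight ψ A x :=
  hA.re_dotProduct_nonneg (ψ x)

theorem bornWeight_sub (ψ : κ → m → ℂ) (A B : Matrix m m ℂ) (x : κ) :
    bornWeight ψ (A - B) x = bornWeight ψ A x - bornWeight ψ B x := by
  simp only [bornWeight, sub_mulVec, dotProduct_sub, Complex.sub_re]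

theorem sum_bornWeight [Fintype κ] [DecidableEq m] {ψ : κ → m → ℂ}
    (hψ : ∑ x, vecMulVec (ψ x) (star (ψ x)) = 1) (A : Matrix m m ℂ) :
    ∑ x, bornWeight ψ A x = A.trace.re := by
  calc ∑ x, bornWeight ψ A x
      = (A * ∑ x, vecMulVec (ψ x) (star (ψ x))).trace.re := by
        simp only [bornWeight, Finset.mul_sum, trace_sum, mul_vecMulVec, trace_vecMulVec,
          Complex.re_sum, dotProduct_comm]
    _ = A.trace.re := by rw [hψ, mul_one]

end Born

section MaximallyMixed

/-- The maximally mixed state `I / d`. -/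
def maximallyMixed (d : ℕ) : Matrix (Fin d) (Fin d) ℂ := (d : ℂ)⁻¹ • 1

variable {κ : Type*} {d : ℕ}

theorem isHermitian_maximallyMixed (d : ℕ) : (maximallyMixed d).IsHermitian := by
  simp [Matrix.IsHermitian, maximallyMixed]

theorem trace_maximallyMixed [NeZero d] : (maximallyMixed d).trace = 1 := by
  simp [maximallyMixed]

theorem bornWeight_maximallyMixed (ψ : κ → Fin d → ℂ) (x : κ) :
    bornWeight ψ (maximallyMixed d) x = (star (ψ x) ⬝ᵥ ψ x).re / d := by
  rw [bornWeight, maximallyMixed, smul_mulVec, one_mulVec, dotProduct_smul, smul_eq_mul, mul_comm,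
    ← div_eq_mul_inv, Complex.div_natCast_re]

theorem bornWeight_maximallyMixed_pos [NeZero d] {ψ : κ → Fin d → ℂ} {x : κ} (hx : ψ x ≠ 0) :
    0 < bornWeight ψ (maximallyMixed d) x := by
  rw [bornWeight_maximallyMixed]
  exact div_pos (Complex.pos_iff.1 (dotProduct_star_self_pos_iff.2 hx)).1
    (Nat.cast_pos.2 (NeZero.pos d))

end MaximallyMixed

section Luders

variable {d k : ℕ}

theorem trace_mul_luders (ψ : Fin k → Fin d → ℂ) (A B : Matrix (Fin d) (Fin d) ℂ) :
    (A * luders ψ B).trace = ∑ x,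
      (star (ψ x) ⬝ᵥ A *ᵥ ψ x) * (star (ψ x) ⬝ᵥ B *ᵥ ψ x) / (star (ψ x) ⬝ᵥ ψ x) := by
  rw [luders, Finset.mul_sum, trace_sum]
  refine Finset.sum_congr rfl fun x _ ↦ ?_
  rw [Matrix.mul_smul, trace_smul, smul_eq_mul, vecMulVec_mul, vecMulVec_mul_vecMulVec,
    vecMulVec_smul, Matrix.mul_smul, trace_smul, mul_vecMulVec, trace_vecMulVec, smul_eq_mul,
    dotProduct_comm (A *ᵥ _), ← dotProduct_mulVec]
  ring

theorem trace_mul_luders_of_isHermitian (ψ : Fin k → Fin d → ℂ) {A B : Matrix (Fin d) (Fin d) ℂ}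
    (hA : A.IsHermitian) (hB : B.IsHermitian) :
    (A * luders ψ B).trace =
      (∑ x, bornWeight ψ A x * bornWeight ψ B x / (star (ψ x) ⬝ᵥ ψ x).re : ℝ) := by
  have normSq_real (x : Fin k) : ((star (ψ x) ⬝ᵥ ψ x).re : ℂ) = star (ψ x) ⬝ᵥ ψ x := by
    simpa only [bornWeight, one_mulVec] using ofReal_bornWeight ψ isHermitian_one x
  rw [trace_mul_luders]
  push_cast
  simp only [ofReal_bornWeight ψ hA, ofReal_bornWeight ψ hB, normSq_real]

theorem chiSqCorr_bornWeight_maximallyMixed (ψ : Fin k → Fin d → ℂ)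
    {ρ ρ' : Matrix (Fin d) (Fin d) ℂ} (hρ : ρ.IsHermitian) (hρ' : ρ'.IsHermitian) :
    chiSqCorr (bornWeight ψ (maximallyMixed d)) (bornWeight ψ ρ) (bornWeight ψ ρ') =
      d * ((ρ - maximallyMixed d) * luders ψ (ρ' - maximallyMixed d)).trace.re := by
  have hmm := isHermitian_maximallyMixed d
  rw [trace_mul_luders_of_isHermitian ψ (hρ.sub hmm) (hρ'.sub hmm), Complex.ofReal_re,
    Finset.mul_sum, chiSqCorr]
  refine Finset.sum_congr rfl fun x _ ↦ ?_
  rw [← bornWeight_sub, ← bornWeight_sub, bornWeight_maximallyMixed, div_div_eq_mul_div]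
  ring

end Luders

section MeanLuders

variable {ι : Type*} [Fintype ι] {d : ℕ} {k : ι → ℕ}

/-- The average Lüders channel `H̄` of a family of rank-1 POVMs, whose numbers of outcomes may
differ. -/
def meanLuders (ψ : ∀ i, Fin (k i) → Fin d → ℂ) (X : Matrix (Fin d) (Fin d) ℂ) :
    Matrix (Fin d) (Fin d) ℂ :=
  (Fintype.card ι : ℂ)⁻¹ • ∑ i, luders (ψ i) X

theorem card_mul_trace_mul_meanLuders [Nonempty ι] (ψ : ∀ i, Fin (k i) → Fin d → ℂ)
    (A B : Matrix (Fin d) (Fin d) ℂ) :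
    Fintype.card ι * (A * meanLuders ψ B).trace = ∑ i, (A * luders (ψ i) B).trace := by
  have card_ne_zero : (Fintype.card ι : ℂ) ≠ 0 := Nat.cast_ne_zero.2 Fintype.card_ne_zero
  rw [meanLuders, Matrix.mul_smul, trace_smul, smul_eq_mul, mul_inv_cancel_left₀ card_ne_zero,
    Finset.mul_sum, trace_sum]

theorem sum_chiSqCorr_bornWeight_maximallyMixed [Nonempty ι] (ψ : ∀ i, Fin (k i) → Fin d → ℂ)
    {ρ ρ' : Matrix (Fin d) (Fin d) ℂ} (hρ : ρ.IsHermitian) (hρ' : ρ'.IsHermitian) :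
    ∑ i, chiSqCorr (bornWeight (ψ i) (maximallyMixed d)) (bornWeight (ψ i) ρ)
        (bornWeight (ψ i) ρ') =
      Fintype.card ι * d *
        ((ρ - maximallyMixed d) * meanLuders ψ (ρ' - maximallyMixed d)).trace.re := by
  have mean_re := congrArg Complex.re
    (card_mul_trace_mul_meanLuders ψ (ρ - maximallyMixed d) (ρ' - maximallyMixed d))
  rw [← Complex.ofReal_natCast, Complex.re_ofReal_mul, Complex.re_sum] at mean_re
  rw [mul_right_comm, mean_re, mul_comm, Finset.mul_sum]
  exact Finset.sum_congr rfl fun i _ ↦ chiSqCorr_bornWeight_maximallyMixed (ψ i) hρ hρ'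

end MeanLuders

theorem chi_square_le_luders_term_general {ι : Type*} [Fintype ι] [DecidableEq ι] [Nonempty ι]
    {d : ℕ} [NeZero d] {k : ι → ℕ} {ψ : ∀ i, Fin (k i) → Fin d → ℂ} (hne : ∀ i x, ψ i x ≠ 0)
    (hpovm : ∀ i, ∑ x, vecMulVec (ψ i x) (star (ψ i x)) = (1 : Matrix (Fin d) (Fin d) ℂ))
    {Ω : Type*} [Fintype Ω] {w : Ω → ℝ} (hw : ∀ ω, 0 ≤ w ω) (hw1 : ∑ ω, w ω = 1)
    {σ : Ω → Matrix (Fin d) (Fin d) ℂ} (hσpsd : ∀ ω, (σ ω).PosSemidef)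
    (hσtr : ∀ ω, (σ ω).trace = 1) :
    chiSqDiv (mixture w fun ω ↦ piDist fun i ↦ bornWeight (ψ i) (σ ω))
        (piDist fun i ↦ bornWeight (ψ i) (maximallyMixed d)) ≤
      (∑ ω, ∑ ω', w ω * w ω' * Real.exp (Fintype.card ι * d *
        ((σ ω - maximallyMixed d) * meanLuders ψ (σ ω' - maximallyMixed d)).trace.re)) - 1 := by
  have sum_eq_one (i : ι) {ρ : Matrix (Fin d) (Fin d) ℂ} (hρ : ρ.trace = 1) :
      ∑ x, bornWeight (ψ i) ρ x = 1 := by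
    rw [sum_bornWeight (hpovm i), hρ, Complex.one_re]
  simp only [← sum_chiSqCorr_bornWeight_maximallyMixed ψ (hσpsd _).isHermitian
    (hσpsd _).isHermitian]
  exact chiSqDiv_mixture_piDist_le hw hw1 (fun ω i ↦ bornWeight_nonneg (ψ i) (hσpsd ω))
    (fun ω i ↦ sum_eq_one i (hσtr ω)) (fun i x ↦ bornWeight_maximallyMixed_pos (hne i x))
    (fun i ↦ sum_eq_one i trace_maximallyMixed)

/-- Decoupled chi-square bound: for `n` rank-1 POVMs with average Lüders channel `H̄`
and a random density matrix `σ` (on a finite probability space, with independent copy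
`σ'`), the chi-square divergence between the mixture of outcome distributions
`E_σ[P_σ]` and the maximally mixed outcome distribution `P_mm` is at most
`E_{σ,σ'}[exp(n d Tr[Δ_σ H̄(Δ_{σ'})])] − 1`, where `Δ_σ = σ − I/d`. -/
theorem chi_square_le_luders_term
    {d k n : ℕ} (hd : 1 ≤ d) (hk : 1 ≤ k) (hn : 1 ≤ n)
    (ψ : Fin n → Fin k → Fin d → ℂ)
    (hne : ∀ i x, ψ i x ≠ 0)
    (hpovm : ∀ i, ∑ x, vecMulVec (ψ i x) (star (ψ i x)) = (1 : Matrix (Fin d) (Fin d) ℂ))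
    {Ω : Type} [Fintype Ω] [Nonempty Ω]
    (w : Ω → ℝ) (hw : ∀ ω, 0 ≤ w ω) (hw1 : ∑ ω, w ω = 1)
    (σ : Ω → Matrix (Fin d) (Fin d) ℂ)
    (hσpsd : ∀ ω, (σ ω).PosSemidef) (hσtr : ∀ ω, (σ ω).trace = 1) :
    let Hbar : Matrix (Fin d) (Fin d) ℂ → Matrix (Fin d) (Fin d) ℂ := fun X =>
      (n : ℂ)⁻¹ • ∑ i, luders (ψ i) X
    let Δ : Ω → Matrix (Fin d) (Fin d) ℂ := fun ω => σ ω - (d : ℂ)⁻¹ • 1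
    ∑ x : Fin n → Fin k,
      ((∑ ω, w ω * ∏ i, (star (ψ i (x i)) ⬝ᵥ (σ ω).mulVec (ψ i (x i))).re)
          - ∏ i, (star (ψ i (x i)) ⬝ᵥ ψ i (x i)).re / d) ^ 2
        / (∏ i, (star (ψ i (x i)) ⬝ᵥ ψ i (x i)).re / d)
      ≤ (∑ ω, ∑ ω', w ω * w ω' *
          Real.exp ((n : ℝ) * d * ((Δ ω) * Hbar (Δ ω')).trace.re)) - 1 := by
  intro _ _
  have : NeZero d := ⟨Nat.one_le_iff_ne_zero.1 hd⟩
  have : NeZero n := ⟨Nat.one_le_iff_ne_zero.1 hn⟩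
  have bound := chi_square_le_luders_term_general hne hpovm hw hw1 hσpsd hσtr
  simp only [chiSqDiv, mixture, piDist, bornWeight_maximallyMixed, meanLuders,
    Fintype.card_fin] at bound
  exact bound

end
end

section
/- Let Z be a finite set equipped with a probability distribution and let z, z' be independent samples from it. Let f : Z × Z → ℝ, let a : Z → [0,1], and let δ ≥ 0 satisfy P(a(z) < 1) ≤ δ. Then E[exp(a(z) a(z') f(z, z'))] ≤ E[exp(f(z, z'))] + 2δ. -/
open BigOperators

noncomputable section

open MeasureTheory

/-!
Convexity of `exp` on the segment from `0` to `x` gives `exp (t * x) ≤ t * exp x + (1 - t)` for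
`t ∈ [0, 1]`. Hence truncating the exponent by `t` costs at most `1` where `t < 1` and nothing
where `t = 1`, so it costs at most `P(t < 1)` on average. For `t = a(z) a(z')` a union bound over
the two samples controls this probability.
-/

section Pointwise

open Set

theorem exp_mul_le_exp_add_one_sub {t : ℝ} (ht : t ∈ Icc (0 : ℝ) 1) (x : ℝ) :
    Real.exp (t * x) ≤ Real.exp x + (1 - t) := by
  have convexity : Real.exp (t * x) ≤ t * Real.exp x + (1 - t) := by
    simpa using convexOn_exp.2 (mem_univ x) (mem_univ 0) ht.1 (sub_nonneg.2 ht.2)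
      (add_sub_cancel t 1)
  have contraction : t * Real.exp x ≤ Real.exp x :=
    mul_le_of_le_one_left (Real.exp_pos x).le ht.2
  linarith

theorem one_sub_le_indicator_lt_one {Ω : Type*} {t : Ω → ℝ} {ω : Ω} (ht : 0 ≤ t ω) :
    1 - t ω ≤ {ω | t ω < 1}.indicator 1 ω := by
  by_cases hω : t ω < 1
  · simpa [hω] using ht
  · rw [indicator_of_notMem (s := {ω | t ω < 1}) hω]
    exact sub_nonpos.2 (not_lt.1 hω)

end Pointwise

section Integral

variable {Ω X Y : Type*} [MeasurableSpace Ω] [MeasurableSpace X] [MeasurableSpace Y]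

theorem integral_exp_mul_le_integral_exp_add_measureReal (μ : Measure Ω) [IsFiniteMeasure μ]
    {t f : Ω → ℝ} (ht : ∀ ω, t ω ∈ Set.Icc (0 : ℝ) 1) (htm : Measurable t)
    (hf : Integrable (fun ω => Real.exp (f ω)) μ) :
    ∫ ω, Real.exp (t ω * f ω) ∂μ ≤ ∫ ω, Real.exp (f ω) ∂μ + μ.real {ω | t ω < 1} := by
  have hs : MeasurableSet {ω | t ω < 1} := measurableSet_lt htm measurable_const
  have hind : Integrable ({ω | t ω < 1}.indicator (1 : Ω → ℝ)) μ :=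
    (integrable_const 1).indicator hs
  calc ∫ ω, Real.exp (t ω * f ω) ∂μ
      ≤ ∫ ω, (Real.exp (f ω) + {ω | t ω < 1}.indicator 1 ω) ∂μ :=
        integral_mono_of_nonneg (ae_of_all _ fun ω => (Real.exp_pos _).le) (hf.add hind)
          (ae_of_all _ fun ω => (exp_mul_le_exp_add_one_sub (ht ω) (f ω)).trans
            (add_le_add_right (one_sub_le_indicator_lt_one (ht ω).1) _))
    _ = ∫ ω, Real.exp (f ω) ∂μ + μ.real {ω | t ω < 1} := by
        rw [integral_add hf hind, integral_indicator_one hs]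

theorem measureReal_prod_mul_lt_one_le (μ : Measure X) [IsProbabilityMeasure μ]
    (ν : Measure Y) [IsProbabilityMeasure ν] (a : X → ℝ) (b : Y → ℝ) :
    (μ.prod ν).real {p | a p.1 * b p.2 < 1} ≤ μ.real {x | a x < 1} + ν.real {y | b y < 1} := by
  have hsub : {p : X × Y | a p.1 * b p.2 < 1}
      ⊆ {x | a x < 1} ×ˢ Set.univ ∪ Set.univ ×ˢ {y | b y < 1} := by
    rintro ⟨x, y⟩ hxy
    by_contra! h
    simp only [Set.mem_union, Set.mem_prod, Set.mem_ofPred_eq, Set.mem_univ, and_true, true_and,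
      not_or, not_lt] at h
    exact (one_le_mul_of_one_le_of_one_le h.1 h.2).not_gt hxy
  calc (μ.prod ν).real {p | a p.1 * b p.2 < 1}
      ≤ (μ.prod ν).real ({x | a x < 1} ×ˢ Set.univ ∪ Set.univ ×ˢ {y | b y < 1}) :=
        measureReal_mono hsub
    _ ≤ (μ.prod ν).real ({x | a x < 1} ×ˢ Set.univ)
          + (μ.prod ν).real (Set.univ ×ˢ {y | b y < 1}) := measureReal_union_le _ _
    _ = μ.real {x | a x < 1} + ν.real {y | b y < 1} := by simp [measureReal_prod_prod]

theorem exp_truncation_bound_general (μ : Measure X) [IsProbabilityMeasure μ]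
    (ν : Measure Y) [IsProbabilityMeasure ν] {f : X × Y → ℝ}
    (hf : Integrable (fun p => Real.exp (f p)) (μ.prod ν))
    {a : X → ℝ} (ha : ∀ x, a x ∈ Set.Icc (0 : ℝ) 1) (ham : Measurable a)
    {b : Y → ℝ} (hb : ∀ y, b y ∈ Set.Icc (0 : ℝ) 1) (hbm : Measurable b) :
    ∫ p, Real.exp (a p.1 * b p.2 * f p) ∂(μ.prod ν)
      ≤ ∫ p, Real.exp (f p) ∂(μ.prod ν) + (μ.real {x | a x < 1} + ν.real {y | b y < 1}) :=
  (integral_exp_mul_le_integral_exp_add_measureReal _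
      (fun p => unitInterval.mul_mem (ha p.1) (hb p.2))
      ((ham.comp measurable_fst).mul (hbm.comp measurable_snd)) hf).trans
    (add_le_add_right (measureReal_prod_mul_lt_one_le μ ν a b) _)

end Integral

section FinitePMF

variable {X Y : Type*} [Fintype X] [Fintype Y]

theorem exists_pmf_toReal_eq {w : X → ℝ} (hw : ∀ x, 0 ≤ w x) (hw1 : ∑ x, w x = 1) :
    ∃ p : PMF X, (fun x => (p x).toReal) = w := by
  have hsum : ∑ x, ENNReal.ofReal (w x) = 1 := by
    rw [← ENNReal.ofReal_sum_of_nonneg fun x _ => hw x, hw1, ENNReal.ofReal_one]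
  exact ⟨PMF.ofFintype _ hsum, funext fun x => ENNReal.toReal_ofReal (hw x)⟩

variable [MeasurableSpace X] [MeasurableSingletonClass X]
  [MeasurableSpace Y] [MeasurableSingletonClass Y]

theorem pmf_measureReal_setOf_eq_sum_filter (p : PMF X) (P : X → Prop) [DecidablePred P] :
    p.toMeasure.real {x | P x} = ∑ x with P x, (p x).toReal := by
  rw [← Finset.coe_filter_univ, measureReal_def, PMF.toMeasure_apply_finset,
    ENNReal.toReal_sum fun x _ => p.apply_ne_top x]

theorem integral_pmf_prod_eq_sum_sum (p : PMF X) (q : PMF Y) (g : X × Y → ℝ) :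
    ∫ z, g z ∂(p.toMeasure.prod q.toMeasure)
      = ∑ x, ∑ y, (p x).toReal * (q y).toReal * g (x, y) := by
  rw [integral_prod g .of_finite]
  simp only [PMF.integral_eq_sum, smul_eq_mul, Finset.mul_sum, mul_assoc]

end FinitePMF

/-- Truncation trick: if `z, z'` are independent samples from a finite probability
space, `f : Z × Z → ℝ`, `a : Z → [0,1]` and `P(a(z) < 1) ≤ δ`, then
`E[exp(a(z) a(z') f(z,z'))] ≤ E[exp(f(z,z'))] + 2δ`. -/
theorem exp_truncation_bound
    {Z : Type} [Fintype Z] [Nonempty Z]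
    (w : Z → ℝ) (hw : ∀ z, 0 ≤ w z) (hw1 : ∑ z, w z = 1)
    (f : Z → Z → ℝ) (a : Z → ℝ) (ha : ∀ z, a z ∈ Set.Icc (0 : ℝ) 1)
    (δ : ℝ) (hδ : 0 ≤ δ)
    (hP : ∑ z ∈ Finset.univ.filter (fun z => a z < 1), w z ≤ δ) :
    ∑ z, ∑ z', w z * w z' * Real.exp (a z * a z' * f z z')
      ≤ (∑ z, ∑ z', w z * w z' * Real.exp (f z z')) + 2 * δ := by
  obtain ⟨p, rfl⟩ := exists_pmf_toReal_eq hw hw1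
  let _ : MeasurableSpace Z := ⊤
  have bound := exp_truncation_bound_general p.toMeasure p.toMeasure
    (f := fun z => f z.1 z.2) .of_finite ha measurable_from_top ha measurable_from_top
  simp only [integral_pmf_prod_eq_sum_sum, pmf_measureReal_setOf_eq_sum_filter] at bound
  linarith

end
end

section
/- Let d ≥ 1, let M ∈ ℂ^{d×d} be Hermitian, and let ψ be a random unit vector distributed according to the uniform (rotation-invariant Haar) probability measure on the unit sphere of ℂ^d. Then E[⟨ψ| M |ψ⟩²] = (Tr[M]² + Tr[M²]) / (d(d+1)). -/
open Matrix BigOperators MeasureTheory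

noncomputable section

/-!
By unitary invariance, `𝔼 |⟨u, v⟩|⁴` depends on `u` only through its norm, so it equals
`C * ‖u‖⁴`. Averaging this identity over `u + ω w` with `ω ∈ {1, i, -1, -i}` turns it into
`2 * 𝔼[⟨v|A|v⟩ ⟨v|B|v⟩] = C * (Tr A * Tr B + Tr (A * B))` for the rank-one matrices `A = |u⟩⟨u|` and
`B = |w⟩⟨w|`. Both sides are bilinear and such matrices span, so the identity holds for all
`A` and `B`; taking `A = B = 1` determines `C`.
-/

section Polarization

variable {n : Type*}

lemma vecMulVec_add_smul_star_self {R : Type*} [CommSemiring R] [StarRing R] {c : R}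
    (hc : star c * c = 1) (u w : n → R) :
    vecMulVec (u + c • w) (star (u + c • w)) =
      vecMulVec u (star u) + vecMulVec w (star w) + c • vecMulVec w (star u) +
        star c • vecMulVec u (star w) := by
  simp only [star_add, star_smul, vecMulVec_add, add_vecMulVec, vecMulVec_smul, smul_vecMulVec,
    smul_add, smul_smul, hc, one_smul]
  abel

lemma star_I_pow_mul_I_pow (k : ℕ) : star (Complex.I ^ k) * Complex.I ^ k = 1 := by
  simp [← mul_pow]

lemma sum_I_pow_smul_vecMulVec_star_self (u w : n → ℂ) :
    ∑ k ∈ Finset.range 4,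
        Complex.I ^ k • vecMulVec (u + Complex.I ^ k • w) (star (u + Complex.I ^ k • w)) =
      (4 : ℂ) • vecMulVec u (star w) := by
  ext i j
  simp only [vecMulVec_add_smul_star_self (star_I_pow_mul_I_pow _)]
  simp only [star_pow, RCLike.star_def, Complex.conj_I, smul_add, Finset.sum_range_succ,
    Finset.range_one, Finset.sum_singleton, pow_zero, one_smul, pow_succ, one_mul, mul_neg,
    neg_smul, smul_neg, Complex.I_mul_I, neg_neg, neg_mul, Matrix.add_apply, Matrix.smul_apply,
    smul_eq_mul, Matrix.neg_apply]
  linear_combination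
    2 * (vecMulVec w (star u) i j - vecMulVec u (star w) i j) * Complex.I_sq

lemma sum_sq_map_vecMulVec_star_self (L : Matrix n n ℂ →ₗ[ℂ] ℂ) (u w : n → ℂ) :
    ∑ k ∈ Finset.range 4,
        L (vecMulVec (u + Complex.I ^ k • w) (star (u + Complex.I ^ k • w))) ^ 2 =
      4 * (L (vecMulVec u (star u)) ^ 2 + L (vecMulVec w (star w)) ^ 2) +
        8 * (L (vecMulVec u (star u)) * L (vecMulVec w (star w)) +
          L (vecMulVec w (star u)) * L (vecMulVec u (star w))) := by
  simp only [vecMulVec_add_smul_star_self (star_I_pow_mul_I_pow _), map_add, map_smul,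
    smul_eq_mul, star_pow, RCLike.star_def, Complex.conj_I, pow_succ, pow_zero, one_mul,
    Finset.sum_range_succ, Finset.range_one, Finset.sum_singleton, mul_neg, neg_mul,
    Complex.I_mul_I, neg_neg]
  linear_combination
    2 * (L (vecMulVec w (star u)) - L (vecMulVec u (star w))) ^ 2 * Complex.I_sq

lemma span_range_vecMulVec_star_self [Finite n] :
    Submodule.span ℂ (Set.range fun u : n → ℂ => vecMulVec u (star u)) = ⊤ := by
  classical
  cases nonempty_fintype n
  have mem_span (u w : n → ℂ) : vecMulVec u (star w) ∈
      Submodule.span ℂ (Set.range fun u : n → ℂ => vecMulVec u (star u)) := by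
    rw [← Submodule.smul_mem_iff _ (by norm_num : (4 : ℂ) ≠ 0),
      ← sum_I_pow_smul_vecMulVec_star_self]
    exact Submodule.sum_mem _ fun k _ =>
      Submodule.smul_mem _ _ (Submodule.subset_span (Set.mem_range_self _))
  refine Submodule.eq_top_iff'.mpr fun A => ?_
  rw [matrix_eq_sum_single A]
  refine Submodule.sum_mem _ fun i _ => Submodule.sum_mem _ fun j _ => ?_
  rw [← mul_one (A i j), ← smul_eq_mul, ← smul_single, single_eq_single_vecMulVec_single]
  exact Submodule.smul_mem _ _ (by simpa using mem_span (Pi.single i 1) (Pi.single j 1))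

end Polarization

variable {n : Type*} [Fintype n]

/-- The expectation value `⟨v|A|v⟩` of the observable `A` in the state `v`, as a linear function
of `A`. -/
def expectationValue {R : Type*} [CommSemiring R] [Star R] (v : n → R) : Matrix n n R →ₗ[R] R where
  toFun A := star v ⬝ᵥ A *ᵥ v
  map_add' A B := by rw [add_mulVec, dotProduct_add]
  map_smul' c A := by rw [smul_mulVec, dotProduct_smul, RingHom.id_apply]

lemma expectationValue_apply {R : Type*} [CommSemiring R] [Star R] (v : n → R)
    (A : Matrix n n R) : expectationValue v A = star v ⬝ᵥ A *ᵥ v :=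
  rfl

lemma expectationValue_vecMulVec {R : Type*} [CommSemiring R] [Star R] (v u w : n → R) :
    expectationValue v (vecMulVec u w) = (star v ⬝ᵥ u) * (w ⬝ᵥ v) := by
  simp [expectationValue_apply, vecMulVec_mulVec, mul_comm]

lemma continuous_expectationValue {R : Type*} [CommSemiring R] [Star R] [TopologicalSpace R]
    [IsTopologicalSemiring R] [ContinuousStar R] (A : Matrix n n R) :
    Continuous fun v : n → R => expectationValue v A := by
  simp only [expectationValue_apply]
  fun_prop

lemma coe_re_expectationValue {A : Matrix n n ℂ} (hA : A.IsHermitian) (v : n → ℂ) :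
    ((expectationValue v A).re : ℂ) = expectationValue v A :=
  Complex.ext rfl (hA.im_star_dotProduct_mulVec_self v).symm

lemma coe_re_trace {A : Matrix n n ℂ} (hA : A.IsHermitian) : (A.trace.re : ℂ) = A.trace :=
  Complex.conj_eq_iff_re.mp (by rw [starRingEnd_apply, ← trace_conjTranspose, hA.eq])

section Sphere

variable {𝕜 : Type*} [RCLike 𝕜]

lemma star_dotProduct_self_eq_norm_sq (u : n → 𝕜) :
    star u ⬝ᵥ u = (‖WithLp.toLp 2 u‖ : 𝕜) ^ 2 := by
  rw [← inner_self_eq_norm_sq_to_K (𝕜 := 𝕜), EuclideanSpace.inner_toLp_toLp, dotProduct_comm]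

lemma star_dotProduct_self_eq_one_iff {u : n → 𝕜} :
    star u ⬝ᵥ u = 1 ↔ ‖WithLp.toLp 2 u‖ = 1 := by
  rw [star_dotProduct_self_eq_norm_sq]
  norm_cast
  exact pow_eq_one_iff_of_nonneg (norm_nonneg _) two_ne_zero

lemma isCompact_setOf_star_dotProduct_self_eq_one :
    IsCompact {v : n → 𝕜 | star v ⬝ᵥ v = 1} := by
  have hsphere : {v : n → 𝕜 | star v ⬝ᵥ v = 1} =
      (EuclideanSpace.equiv n 𝕜).toHomeomorph.symm ⁻¹' Metric.sphere 0 1 := by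
    ext v
    simp [star_dotProduct_self_eq_one_iff]
  rw [hsphere, Homeomorph.isCompact_preimage]
  exact isCompact_sphere 0 1

lemma exists_unitaryGroup_row_eq_star [DecidableEq n] {u : n → 𝕜} (hu : star u ⬝ᵥ u = 1) (i : n) :
    ∃ U : unitaryGroup n 𝕜, (U : Matrix n n 𝕜) i = star u := by
  have horth : Orthonormal 𝕜 (({i} : Set n).domRestrict fun _ => WithLp.toLp 2 u) := by
    rw [orthonormal_subsingleton_iff]
    simpa [star_dotProduct_self_eq_one_iff] using hu
  obtain ⟨b, hb⟩ := horth.exists_orthonormalBasis_extension_of_card_eq finrank_euclideanSpace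
  refine ⟨star ⟨_, (EuclideanSpace.basisFun n 𝕜).toMatrix_orthonormalBasis_mem_unitary b⟩, ?_⟩
  ext j
  simp [Matrix.star_apply, Module.Basis.toMatrix_apply, hb i rfl]

lemma exists_unitaryGroup_star_dotProduct_eq [DecidableEq n] (u : n → 𝕜) (i : n) :
    ∃ U : unitaryGroup n 𝕜, ∀ v,
      star u ⬝ᵥ v = (‖WithLp.toLp 2 u‖ : 𝕜) * ((U : Matrix n n 𝕜) *ᵥ v) i := by
  rcases eq_or_ne u 0 with rfl | hu
  · exact ⟨1, by simp⟩
  have hnorm : (‖WithLp.toLp 2 u‖ : 𝕜) ≠ 0 := by simpa using hu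
  have hunit : star ((‖WithLp.toLp 2 u‖ : 𝕜)⁻¹ • u) ⬝ᵥ ((‖WithLp.toLp 2 u‖ : 𝕜)⁻¹ • u) = 1 := by
    rw [star_dotProduct_self_eq_one_iff, WithLp.toLp_smul, norm_smul_inv_norm (by simpa using hu)]
  obtain ⟨U, hU⟩ := exists_unitaryGroup_row_eq_star hunit i
  refine ⟨U, fun v => ?_⟩
  rw [mulVec, hU, star_smul, smul_dotProduct, star_inv₀, RCLike.star_def, RCLike.conj_ofReal,
    smul_eq_mul, mul_inv_cancel_left₀ hnorm]

end Sphere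

section Moments

variable {𝕜 : Type*} [RCLike 𝕜] {μ : Measure (n → 𝕜)}

lemma integrable_of_ae_star_dotProduct_self_eq_one [IsFiniteMeasure μ]
    (hμ : ∀ᵐ v ∂μ, star v ⬝ᵥ v = 1) {E : Type*} [NormedAddCommGroup E] {f : (n → 𝕜) → E}
    (hf : Continuous f) : Integrable f μ := by
  rw [← Measure.restrict_eq_self_of_ae_mem hμ]
  exact hf.continuousOn.integrableOn_compact isCompact_setOf_star_dotProduct_self_eq_one

lemma integrable_expectationValue_mul_expectationValue [IsFiniteMeasure μ]
    (hμ : ∀ᵐ v ∂μ, star v ⬝ᵥ v = 1) (A B : Matrix n n 𝕜) :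
    Integrable (fun v => expectationValue v A * expectationValue v B) μ :=
  integrable_of_ae_star_dotProduct_self_eq_one hμ
    ((continuous_expectationValue A).mul (continuous_expectationValue B))

/-- The bilinear form `(A, B) ↦ 𝔼[⟨v|A|v⟩ ⟨v|B|v⟩]`. Concentration on the unit sphere, required by
`hμ`, provides the integrability on which bilinearity depends. -/
def expectationValueMoment (μ : Measure (n → 𝕜)) [IsFiniteMeasure μ]
    (hμ : ∀ᵐ v ∂μ, star v ⬝ᵥ v = 1) : Matrix n n 𝕜 →ₗ[𝕜] Matrix n n 𝕜 →ₗ[𝕜] 𝕜 :=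
  have hint := integrable_expectationValue_mul_expectationValue hμ
  LinearMap.mk₂ 𝕜 (fun A B => ∫ v, expectationValue v A * expectationValue v B ∂μ)
    (fun A A' B => by simp only [map_add, add_mul, integral_add (hint _ _) (hint _ _)])
    (fun c A B => by simp only [map_smul, smul_eq_mul, mul_assoc, integral_const_mul])
    (fun A B B' => by simp only [map_add, mul_add, integral_add (hint _ _) (hint _ _)])
    (fun c A B => by simp only [map_smul, smul_eq_mul, mul_left_comm _ c, integral_const_mul])

lemma expectationValueMoment_apply [IsFiniteMeasure μ] (hμ : ∀ᵐ v ∂μ, star v ⬝ᵥ v = 1)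
    (A B : Matrix n n 𝕜) : expectationValueMoment μ hμ A B =
      ∫ v, expectationValue v A * expectationValue v B ∂μ :=
  rfl

lemma expectationValueMoment_one_one [IsProbabilityMeasure μ] [DecidableEq n]
    (hμ : ∀ᵐ v ∂μ, star v ⬝ᵥ v = 1) : expectationValueMoment μ hμ 1 1 = 1 := by
  have hone : ∀ᵐ v ∂μ, expectationValue v 1 * expectationValue v 1 = 1 := by
    filter_upwards [hμ] with v hv
    simp [expectationValue_apply, hv]
  simp [expectationValueMoment_apply, integral_congr_ae hone]

end Moments

section MomentIdentity

variable {μ : Measure (n → ℂ)}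

lemma sum_expectationValueMoment_vecMulVec_star_self [IsFiniteMeasure μ]
    (hμ : ∀ᵐ v ∂μ, star v ⬝ᵥ v = 1) (u w : n → ℂ) :
    ∑ k ∈ Finset.range 4, expectationValueMoment μ hμ
        (vecMulVec (u + Complex.I ^ k • w) (star (u + Complex.I ^ k • w)))
        (vecMulVec (u + Complex.I ^ k • w) (star (u + Complex.I ^ k • w))) =
      4 * (expectationValueMoment μ hμ (vecMulVec u (star u)) (vecMulVec u (star u)) +
          expectationValueMoment μ hμ (vecMulVec w (star w)) (vecMulVec w (star w))) +
        16 * expectationValueMoment μ hμ (vecMulVec u (star u)) (vecMulVec w (star w)) := by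
  have hint := integrable_expectationValue_mul_expectationValue hμ
  have hswap (v : n → ℂ) :
      expectationValue v (vecMulVec w (star u)) * expectationValue v (vecMulVec u (star w)) =
        expectationValue v (vecMulVec u (star u)) * expectationValue v (vecMulVec w (star w)) := by
    simp only [expectationValue_vecMulVec]
    ring
  simp only [expectationValueMoment_apply]
  rw [← integral_finsetSum _ fun k _ => hint _ _]
  simp only [← sq, sum_sq_map_vecMulVec_star_self, hswap, ← two_mul]
  simp only [sq]
  rw [integral_add (((hint _ _).fun_add (hint _ _)).const_mul _)
      (((hint _ _).const_mul _).const_mul _), integral_const_mul,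
    integral_add (hint _ _) (hint _ _), integral_const_mul, integral_const_mul]
  ring

/-- The bilinear form `(A, B) ↦ Tr A * Tr B + Tr (A * B)`. -/
def traceMoment (n R : Type*) [Fintype n] [CommSemiring R] :
    Matrix n n R →ₗ[R] Matrix n n R →ₗ[R] R :=
  (LinearMap.mul R R).compl₁₂ (traceLinearMap n R R) (traceLinearMap n R R) +
    (LinearMap.mul R (Matrix n n R)).compr₂ (traceLinearMap n R R)

lemma traceMoment_apply {R : Type*} [CommSemiring R] (A B : Matrix n n R) :
    traceMoment n R A B = A.trace * B.trace + (A * B).trace :=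
  rfl

lemma sum_sq_trace_vecMulVec_star_self (u w : n → ℂ) :
    ∑ k ∈ Finset.range 4,
        (vecMulVec (u + Complex.I ^ k • w) (star (u + Complex.I ^ k • w))).trace ^ 2 =
      4 * ((vecMulVec u (star u)).trace ^ 2 + (vecMulVec w (star w)).trace ^ 2) +
        8 * traceMoment n ℂ (vecMulVec u (star u)) (vecMulVec w (star w)) := by
  have hsum := sum_sq_map_vecMulVec_star_self (traceLinearMap n ℂ ℂ) u w
  simp only [traceLinearMap_apply] at hsum
  rw [hsum, traceMoment_apply, vecMulVec_mul_vecMulVec]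
  simp only [trace_smul, trace_vecMulVec, vecMulVec_smul, smul_eq_mul, dotProduct_comm w (star u)]

lemma two_mul_expectationValueMoment_eq_mul_traceMoment [IsFiniteMeasure μ]
    (hμ : ∀ᵐ v ∂μ, star v ⬝ᵥ v = 1) {C : ℂ}
    (hC : ∀ u, expectationValueMoment μ hμ (vecMulVec u (star u)) (vecMulVec u (star u)) =
      C * (vecMulVec u (star u)).trace ^ 2) (A B : Matrix n n ℂ) :
    2 * expectationValueMoment μ hμ A B = C * traceMoment n ℂ A B := by
  suffices hform : (2 : ℂ) • expectationValueMoment μ hμ = C • traceMoment n ℂ from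
    LinearMap.congr_fun₂ hform A B
  refine LinearMap.ext_on_range span_range_vecMulVec_star_self fun u =>
    LinearMap.ext_on_range span_range_vecMulVec_star_self fun w => ?_
  have hsum := sum_expectationValueMoment_vecMulVec_star_self hμ u w
  simp only [hC, ← Finset.mul_sum, sum_sq_trace_vecMulVec_star_self] at hsum
  simp only [LinearMap.smul_apply, smul_eq_mul]
  linear_combination -hsum / 8

end MomentIdentity

section Invariance

variable {𝕜 : Type*} [RCLike 𝕜] {μ : Measure (n → 𝕜)} [DecidableEq n]

/-- Invariance of a measure on `𝕜ⁿ` under the unitary group (the orthogonal group when `𝕜 = ℝ`). -/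
def IsUnitarilyInvariant (μ : Measure (n → 𝕜)) : Prop :=
  ∀ U : unitaryGroup n 𝕜, μ.map (fun v => (U : Matrix n n 𝕜) *ᵥ v) = μ

lemma IsUnitarilyInvariant.integral_comp_mulVec (hinv : IsUnitarilyInvariant μ) {E : Type*}
    [NormedAddCommGroup E] [NormedSpace ℝ E] {f : (n → 𝕜) → E} (hf : Continuous f)
    (U : unitaryGroup n 𝕜) : ∫ v, f ((U : Matrix n n 𝕜) *ᵥ v) ∂μ = ∫ v, f v ∂μ := by
  conv_rhs => rw [← hinv U]
  exact (integral_map (Continuous.matrix_mulVec continuous_const continuous_id).aemeasurable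
    hf.aestronglyMeasurable).symm

lemma IsUnitarilyInvariant.integral_expectationValue_vecMulVec_star_self_sq
    (hinv : IsUnitarilyInvariant μ) (u : n → 𝕜) (i : n) :
    ∫ v, expectationValue v (vecMulVec u (star u)) ^ 2 ∂μ =
      (∫ v, (star (v i) * v i) ^ 2 ∂μ) * (vecMulVec u (star u)).trace ^ 2 := by
  obtain ⟨U, hU⟩ := exists_unitaryGroup_star_dotProduct_eq u i
  have hexp (v : n → 𝕜) : expectationValue v (vecMulVec u (star u)) ^ 2 =
      (star (((U : Matrix n n 𝕜) *ᵥ v) i) * ((U : Matrix n n 𝕜) *ᵥ v) i) ^ 2 *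
        (vecMulVec u (star u)).trace ^ 2 := by
    rw [expectationValue_vecMulVec, star_dotProduct v u, hU, trace_vecMulVec, dotProduct_comm u,
      star_dotProduct_self_eq_norm_sq]
    simp only [star_mul', RCLike.star_def, RCLike.conj_ofReal]
    ring
  simp only [hexp, integral_mul_const]
  rw [hinv.integral_comp_mulVec (f := fun v => (star (v i) * v i) ^ 2) (by fun_prop)]

lemma IsUnitarilyInvariant.exists_integral_expectationValue_vecMulVec_star_self_sq
    (hinv : IsUnitarilyInvariant μ) :
    ∃ C : 𝕜, ∀ u, ∫ v, expectationValue v (vecMulVec u (star u)) ^ 2 ∂μ =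
      C * (vecMulVec u (star u)).trace ^ 2 := by
  rcases isEmpty_or_nonempty n with _ | ⟨⟨i⟩⟩
  · exact ⟨0, fun u => by simp [Subsingleton.elim (vecMulVec u (star u)) 0]⟩
  · exact ⟨_, fun u => hinv.integral_expectationValue_vecMulVec_star_self_sq u i⟩

end Invariance

theorem haar_sphere_second_moment_general [DecidableEq n] {μ : Measure (n → ℂ)}
    [IsProbabilityMeasure μ] (hμ : ∀ᵐ v ∂μ, star v ⬝ᵥ v = 1) (hinv : IsUnitarilyInvariant μ)
    (A B : Matrix n n ℂ) :
    ∫ v, (star v ⬝ᵥ A *ᵥ v) * (star v ⬝ᵥ B *ᵥ v) ∂μ =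
      (A.trace * B.trace + (A * B).trace) / (Fintype.card n * (Fintype.card n + 1)) := by
  obtain ⟨C, hC⟩ := hinv.exists_integral_expectationValue_vecMulVec_star_self_sq
  have hmoment := two_mul_expectationValueMoment_eq_mul_traceMoment hμ (C := C) fun u => by
    simpa only [expectationValueMoment_apply, sq] using hC u
  have hone : C * (Fintype.card n * (Fintype.card n + 1)) = 2 := by
    have htr := hmoment 1 1
    rw [expectationValueMoment_one_one, traceMoment_apply, one_mul, trace_one] at htr
    linear_combination -htr
  have hcard : (Fintype.card n * (Fintype.card n + 1) : ℂ) ≠ 0 :=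
    right_ne_zero_of_mul (hone.trans_ne two_ne_zero)
  change expectationValueMoment μ hμ A B = traceMoment n ℂ A B / _
  rw [eq_div_iff hcard]
  linear_combination
    (Fintype.card n * (Fintype.card n + 1) : ℂ) / 2 * hmoment A B + traceMoment n ℂ A B / 2 * hone

/-- Second moment of a Hermitian quadratic form under the Haar measure on the unit
sphere of `ℂ^d`: if `μ` is a probability measure concentrated on the unit sphere
`{ψ : ⟨ψ,ψ⟩ = 1}` and invariant under every unitary `U ∈ U(d)` (this uniquely
characterizes the uniform/Haar measure on the sphere), then for every Hermitian `M`,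
`E[⟨ψ|M|ψ⟩²] = (Tr[M]² + Tr[M²])/(d(d+1))`. -/
theorem haar_sphere_second_moment
    {d : ℕ} (hd : 1 ≤ d)
    (M : Matrix (Fin d) (Fin d) ℂ) (hM : M.IsHermitian)
    (μ : Measure (Fin d → ℂ)) [IsProbabilityMeasure μ]
    (hsupp : μ {v : Fin d → ℂ | star v ⬝ᵥ v = 1}ᶜ = 0)
    (hinv : ∀ U : Matrix.unitaryGroup (Fin d) ℂ,
      μ.map (fun v => (U : Matrix (Fin d) (Fin d) ℂ).mulVec v) = μ) :
    ∫ v, ((star v ⬝ᵥ M.mulVec v).re) ^ 2 ∂μ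
      = ((M.trace.re) ^ 2 + (M * M).trace.re) / ((d : ℝ) * (d + 1)) := by
  refine Complex.ofReal_injective (integral_complex_ofReal.symm.trans ?_)
  simpa [sq, coe_re_trace hM, coe_re_trace (sq M ▸ hM.pow 2 : (M * M).IsHermitian),
    ← expectationValue_apply, coe_re_expectationValue hM] using
    haar_sphere_second_moment_general hsupp hinv M M

end
end
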